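/- arXiv:1811.12810 — 2 statements merged into one kernel-verified Lean document; each statement's English description precedes it below -/
import Mathlib

section
/- Let Ω ⊂ ℝⁿ be a nonempty open bounded convex set, and for r ≥ 0 let Ω_r := {x ∈ Ω : dist(x, ∂Ω) > r}. Then the function r ↦ |Ω_r|^{1/n} (the n-th root of the Lebesgue measure of the inner parallel set) is concave on [0, R_Ω], where R_Ω is the inradius of Ω. -/
/-!
The theorem follows from the Brunn–Minkowski inequality
`|aA + bB|^{1/n} ≥ a|A|^{1/n} + b|B|^{1/n}` (`BM.brunnMinkowski`) and the concavity on `Ω` of the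
distance to the boundary (`BM.infDist_concave`), which gives `a Ω_r + b Ω_s ⊆ Ω_{ar+bs}`.

Brunn–Minkowski is derived from the Prékopa–Leindler inequality (`BM.pl`). In dimension one
(`BM.pl_real`) the latter comes from applying the one-dimensional Brunn–Minkowski inequality
(`BM.real`) to superlevel sets of functions normalised to have supremum `1`, integrating with the
layer-cake formula, and using the weighted arithmetic-geometric mean inequality. The passage from
`n` to `n + 1` is Tonelli's theorem: the marginals satisfy the one-dimensional hypothesis by the
`n`-dimensional case. For indicator functions Prékopa–Leindler reads `|aA + bB| ≥ |A|^a |B|^b`, and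
rescaling `A` and `B` to unit volume turns this into the form with `n`-th roots.

At `r = R_Ω` the set `Ω_r` is empty, so Brunn–Minkowski does not apply. There `Ω_R` is replaced by
a point `p` realising the inradius: `a Ω_r + b p ⊆ Ω_{ar+bR}` has volume `a^n |Ω_r|`.

Inequalities for Minkowski sums are stated for a separate set `C` containing
`aA + bB`, which avoids measurability questions about the sum itself.
-/

open MeasureTheory Metric Set

noncomputable section

/-- The inner parallel set `Ω_r = {x ∈ Ω : dist(x, ∂Ω) > r}`. -/
def innerParallel {n : ℕ} (Ω : Set (EuclideanSpace ℝ (Fin n))) (r : ℝ) :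
    Set (EuclideanSpace ℝ (Fin n)) :=
  {x ∈ Ω | r < infDist x (frontier Ω)}

/-- The inradius `R_Ω = sup_{x ∈ Ω} dist(x, ∂Ω)`. -/
def inradius {n : ℕ} (Ω : Set (EuclideanSpace ℝ (Fin n))) : ℝ :=
  sSup ((fun x => infDist x (frontier Ω)) '' Ω)

open scoped ENNReal Pointwise

/-! ### One-dimensional inequalities -/

/-- Weighted AM-GM inequality in `ℝ≥0∞`. -/
lemma BM.geom_mean_le (a b : ℝ) (ha : 0 < a) (hb : 0 < b) (hab : a + b = 1) (x y : ℝ≥0∞) :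
    x ^ a * y ^ b ≤ ENNReal.ofReal a * x + ENNReal.ofReal b * y := by
  have ha' : ENNReal.ofReal a ≠ 0 := by simpa using ha
  have hb' : ENNReal.ofReal b ≠ 0 := by simpa using hb
  induction x with
  | top => simp [ENNReal.mul_top ha']
  | coe x =>
    induction y with
    | top => simp [ENNReal.mul_top hb']
    | coe y =>
      have h := NNReal.geom_mean_le_arith_mean2_weighted ⟨a, ha.le⟩ ⟨b, hb.le⟩ x y
        (NNReal.eq hab)
      rw [← ENNReal.coe_rpow_of_nonneg _ ha.le, ← ENNReal.coe_rpow_of_nonneg _ hb.le,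
        ENNReal.ofReal_eq_coe_nnreal ha.le, ENNReal.ofReal_eq_coe_nnreal hb.le]
      exact_mod_cast h

/-- One-dimensional Brunn–Minkowski for compact sets: the translates `aK + b min L` and
`a max K + bL` both lie in `C` and meet in at most one point. -/
lemma BM.real_compact (a b : ℝ) (ha : 0 < a) (hb : 0 < b) (K L C : Set ℝ)
    (hK : IsCompact K) (hL : IsCompact L) (hKn : K.Nonempty) (hLn : L.Nonempty)
    (h : ∀ x ∈ K, ∀ y ∈ L, a * x + b * y ∈ C) :
    ENNReal.ofReal a * volume K + ENNReal.ofReal b * volume L ≤ volume C := by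
  obtain ⟨k, hk, hkm⟩ := hK.exists_isGreatest hKn
  obtain ⟨l, hl, hlm⟩ := hL.exists_isLeast hLn
  set S : Set ℝ := (b * l) +ᵥ (a • K) with hS
  set T : Set ℝ := (a * k) +ᵥ (b • L) with hT
  have hSv : volume S = ENNReal.ofReal a * volume K := by
    rw [hS, measure_vadd, Measure.addHaar_smul]; simp [abs_of_pos ha]
  have hTv : volume T = ENNReal.ofReal b * volume L := by
    rw [hT, measure_vadd, Measure.addHaar_smul]; simp [abs_of_pos hb]
  have hTm : MeasurableSet T := ((hL.smul b).vadd (a * k)).isClosed.measurableSet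
  have hST : S ∪ T ⊆ C := by
    rintro z (⟨_, ⟨x, hx, rfl⟩, rfl⟩ | ⟨_, ⟨x, hx, rfl⟩, rfl⟩)
    · have := h x hx l hl
      simpa [add_comm] using this
    · have := h k hk x hx
      simpa using this
  have hI : volume (S ∩ T) = 0 := by
    refine measure_mono_null (t := {a * k + b * l}) ?_ (by simp)
    rintro z ⟨⟨_, ⟨x, hx, rfl⟩, rfl⟩, ⟨_, ⟨y, hy, rfl⟩, hz⟩⟩
    have h1 := mul_le_mul_of_nonneg_left (hkm hx) ha.le
    have h2 := mul_le_mul_of_nonneg_left (hlm hy) hb.le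
    simp only [vadd_eq_add, smul_eq_mul, mem_singleton_iff] at *
    linarith
  calc _ = volume S + volume T := by rw [hSv, hTv]
    _ = volume (S ∪ T) := by rw [← measure_union_add_inter S hTm, hI, add_zero]
    _ ≤ volume C := measure_mono hST

/-- One-dimensional Brunn–Minkowski for measurable sets, by inner regularity. -/
lemma BM.real (a b : ℝ) (ha : 0 < a) (hb : 0 < b) (A B C : Set ℝ)
    (hA : MeasurableSet A) (hB : MeasurableSet B) (hAn : A.Nonempty) (hBn : B.Nonempty)
    (h : ∀ x ∈ A, ∀ y ∈ B, a * x + b * y ∈ C) :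
    ENNReal.ofReal a * volume A + ENNReal.ofReal b * volume B ≤ volume C := by
  obtain ⟨p, hp⟩ := hAn
  obtain ⟨q, hq⟩ := hBn
  have key : ∀ K ⊆ A, IsCompact K → ∀ L ⊆ B, IsCompact L →
      ENNReal.ofReal a * volume K + ENNReal.ofReal b * volume L ≤ volume C := by
    intro K hKA hK L hLB hL
    -- adjoining points makes the compact sets nonempty
    refine le_trans ?_ (BM.real_compact a b ha hb (insert p K) (insert q L) C (hK.insert p)
      (hL.insert q) (insert_nonempty _ _) (insert_nonempty _ _)
      fun x hx y hy => h x (insert_subset hp hKA hx) y (insert_subset hq hLB hy))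
    gcongr <;> exact subset_insert _ _
  rw [hA.measure_eq_iSup_isCompact, hB.measure_eq_iSup_isCompact]
  simp only [ENNReal.mul_iSup, iSup_and']
  exact ENNReal.biSup_add_biSup_le' ⟨∅, empty_subset _, isCompact_empty⟩
    ⟨∅, empty_subset _, isCompact_empty⟩ fun K hK L hL => key K hK.1 hK.2 L hL.1 hL.2

/-- Layer-cake formula for an everywhere finite function with values in `ℝ≥0∞`. -/
lemma BM.layercake (f : ℝ → ℝ≥0∞) (hf : Measurable f) (hf' : ∀ x, f x ≠ ⊤) :
    ∫⁻ x, f x = ∫⁻ t in Ioi (0 : ℝ), volume {x | ENNReal.ofReal t < f x} := by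
  have h := lintegral_eq_lintegral_meas_lt (f := fun x => (f x).toReal) volume
    (Filter.Eventually.of_forall fun x => ENNReal.toReal_nonneg) hf.ennreal_toReal.aemeasurable
  simp only [ENNReal.ofReal_toReal (hf' _)] at h
  rw [h]
  refine setLIntegral_congr_fun measurableSet_Ioi fun t ht => ?_
  simp only [ENNReal.ofReal_lt_iff_lt_toReal (le_of_lt ht) (hf' _)]

/-- One-dimensional Prékopa–Leindler for functions with supremum `1`, in the stronger form with
the arithmetic mean of the integrals. -/
lemma BM.pl_normalized (a b : ℝ) (ha : 0 < a) (hb : 0 < b) (hab : a + b = 1)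
    (f g h : ℝ → ℝ≥0∞) (hf : Measurable f) (hg : Measurable g) (hh : Measurable h)
    (hf1 : (⨆ x, f x) = 1) (hg1 : (⨆ x, g x) = 1)
    (hfgh : ∀ x y, f x ^ a * g y ^ b ≤ h (a * x + b * y)) :
    ENNReal.ofReal a * (∫⁻ x, f x) + ENNReal.ofReal b * (∫⁻ x, g x) ≤ ∫⁻ x, h x := by
  have hfle : ∀ x, f x ≤ 1 := fun x => hf1 ▸ le_iSup f x
  have hgle : ∀ x, g x ≤ 1 := fun x => hg1 ▸ le_iSup g x
  -- `h` may take the value `∞`; capping it at `1` loses nothing, since the levels `t ≥ 1` of `f` and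
  -- `g` are empty.
  refine le_trans ?_ (lintegral_mono fun x => min_le_left (h x) 1)
  rw [BM.layercake f hf fun x => ne_top_of_le_ne_top ENNReal.one_ne_top (hfle x),
    BM.layercake g hg fun x => ne_top_of_le_ne_top ENNReal.one_ne_top (hgle x),
    BM.layercake _ (hh.min measurable_const) fun x =>
      ne_top_of_le_ne_top ENNReal.one_ne_top (min_le_right _ _)]
  -- these superadditivity forms need no measurability of the distribution functions
  refine (add_le_add (lintegral_const_mul_le _ _) (lintegral_const_mul_le _ _)).trans ?_
  refine (le_lintegral_add _ _).trans ?_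
  refine setLIntegral_mono' measurableSet_Ioi fun t ht => ?_
  set T := ENNReal.ofReal t with hT
  have hT0 : T ≠ 0 := by simpa [hT] using ht
  rcases le_or_gt 1 T with h1 | h1
  · have e1 : {x | T < f x} = ∅ := by
      ext x; simpa using (hfle x).trans h1
    have e2 : {x | T < g x} = ∅ := by
      ext x; simpa using (hgle x).trans h1
    simp [e1, e2]
  · refine BM.real a b ha hb _ _ _ (measurableSet_lt measurable_const hf)
      (measurableSet_lt measurable_const hg) 
      (lt_iSup_iff.1 (h1.trans_eq hf1.symm)) (lt_iSup_iff.1 (h1.trans_eq hg1.symm)) ?_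
    intro x hx y hy
    refine lt_min (lt_of_lt_of_le ?_ (hfgh x y)) h1
    calc T = T ^ a * T ^ b := by
          rw [← ENNReal.rpow_add _ _ hT0 ENNReal.ofReal_ne_top, hab, ENNReal.rpow_one]
      _ < f x ^ a * g y ^ b :=
          ENNReal.mul_lt_mul (ENNReal.rpow_lt_rpow hx ha) (ENNReal.rpow_lt_rpow hy hb)

/-- One-dimensional Prékopa–Leindler for bounded functions: divide `f` and `g` by their suprema. -/
lemma BM.pl_bounded (a b : ℝ) (ha : 0 < a) (hb : 0 < b) (hab : a + b = 1)
    (f g h : ℝ → ℝ≥0∞) (hf : Measurable f) (hg : Measurable g) (hh : Measurable h)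
    (hf1 : (⨆ x, f x) ≠ ⊤) (hg1 : (⨆ x, g x) ≠ ⊤)
    (hfgh : ∀ x y, f x ^ a * g y ^ b ≤ h (a * x + b * y)) :
    (∫⁻ x, f x) ^ a * (∫⁻ x, g x) ^ b ≤ ∫⁻ x, h x := by
  set F := ⨆ x, f x with hF
  set G := ⨆ x, g x with hG
  rcases eq_or_ne F 0 with h0 | hF0
  · have : ∀ x, f x = 0 := by simpa [hF] using h0
    simp [this, ha]
  rcases eq_or_ne G 0 with h0 | hG0
  · have : ∀ x, g x = 0 := by simpa [hG] using h0
    simp [this, hb]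
  have hFa : F ^ a ≠ 0 := by simp [hF0, hf1]
  have hFa' : F ^ a ≠ ⊤ := by simp [hf1, ha.le]
  have hGa : G ^ b ≠ 0 := by simp [hG0, hg1]
  have hGa' : G ^ b ≠ ⊤ := by simp [hg1, hb.le]
  have key := BM.pl_normalized a b ha hb hab (fun x => F⁻¹ * f x) (fun x => G⁻¹ * g x)
    (fun x => (F ^ a * G ^ b)⁻¹ * h x) (hf.const_mul _) (hg.const_mul _) (hh.const_mul _)
    (by rw [← ENNReal.mul_iSup, ENNReal.inv_mul_cancel hF0 hf1])
    (by rw [← ENNReal.mul_iSup, ENNReal.inv_mul_cancel hG0 hg1])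
    (fun x y => by
      rw [ENNReal.mul_rpow_of_nonneg _ _ ha.le, ENNReal.mul_rpow_of_nonneg _ _ hb.le,
        ENNReal.inv_rpow, ENNReal.inv_rpow, ENNReal.mul_inv (Or.inl hFa) (Or.inl hFa'),
        mul_mul_mul_comm]
      gcongr
      exact hfgh x y)
  replace key := (BM.geom_mean_le a b ha hb hab _ _).trans key
  rw [lintegral_const_mul _ hf, lintegral_const_mul _ hg, lintegral_const_mul _ hh,
    ENNReal.mul_rpow_of_nonneg _ _ ha.le, ENNReal.mul_rpow_of_nonneg _ _ hb.le,
    ENNReal.inv_rpow, ENNReal.inv_rpow, mul_mul_mul_comm,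
    ← ENNReal.mul_inv (Or.inl hFa) (Or.inl hFa')] at key
  have h3 := mul_le_mul_right key (F ^ a * G ^ b)
  rwa [← mul_assoc (F ^ a * G ^ b), ← mul_assoc (F ^ a * G ^ b), ENNReal.mul_inv_cancel (mul_ne_zero hFa hGa)
    (ENNReal.mul_ne_top hFa' hGa'), one_mul, one_mul] at h3

lemma BM.iSup_trunc (f : ℝ → ℝ≥0∞) (hf : Measurable f) :
    ∫⁻ x, f x = ⨆ k : ℕ, ∫⁻ x, min (f x) k := by
  rw [← lintegral_iSup (fun k => hf.min measurable_const)
    (fun i j hij x => by dsimp only; gcongr)]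
  congr 1 with x
  rw [← inf_iSup_eq, ENNReal.iSup_natCast, inf_top_eq]

/-- The one-dimensional Prékopa–Leindler inequality, by truncating `f` and `g` at integer heights. -/
lemma BM.pl_real (a b : ℝ) (ha : 0 < a) (hb : 0 < b) (hab : a + b = 1)
    (f g h : ℝ → ℝ≥0∞) (hf : Measurable f) (hg : Measurable g) (hh : Measurable h)
    (hfgh : ∀ x y, f x ^ a * g y ^ b ≤ h (a * x + b * y)) :
    (∫⁻ x, f x) ^ a * (∫⁻ x, g x) ^ b ≤ ∫⁻ x, h x := by
  rw [BM.iSup_trunc f hf, BM.iSup_trunc g hg]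
  have e1 := (ENNReal.orderIsoRpow a ha).map_iSup (fun k : ℕ => ∫⁻ x, min (f x) k)
  have e2 := (ENNReal.orderIsoRpow b hb).map_iSup (fun k : ℕ => ∫⁻ x, min (g x) k)
  simp only [ENNReal.orderIsoRpow_apply] at e1 e2
  rw [e1, e2]
  simp only [ENNReal.iSup_mul, ENNReal.mul_iSup]
  have hb' : ∀ (f : ℝ → ℝ≥0∞) (k : ℕ), (⨆ x, min (f x) (k : ℝ≥0∞)) ≠ ⊤ := fun f k =>
    ne_top_of_le_ne_top (ENNReal.natCast_ne_top k) (iSup_le fun x => min_le_right _ _)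
  refine iSup₂_le fun i j => ?_
  refine BM.pl_bounded a b ha hb hab _ _ _ (hf.min measurable_const) (hg.min measurable_const) hh
    (hb' f _) (hb' g _) fun x y => le_trans ?_ (hfgh x y)
  gcongr <;> exact min_le_left _ _

/-! ### Prékopa–Leindler and Brunn–Minkowski in dimension `n` -/

/-- The Prékopa–Leindler inequality on `ℝⁿ`, by induction on the dimension. -/
lemma BM.pl (a b : ℝ) (ha : 0 < a) (hb : 0 < b) (hab : a + b = 1) (n : ℕ) :
    ∀ f g h : (Fin n → ℝ) → ℝ≥0∞, Measurable f → Measurable g → Measurable h →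
    (∀ x y, f x ^ a * g y ^ b ≤ h (a • x + b • y)) →
    (∫⁻ x, f x) ^ a * (∫⁻ x, g x) ^ b ≤ ∫⁻ x, h x := by
  induction n with
  | zero =>
    intro f g h _ _ _ H
    have h1 : volume (univ : Set (Fin 0 → ℝ)) = 1 := by simp [volume_pi]
    have hI : ∀ f : (Fin 0 → ℝ) → ℝ≥0∞, ∫⁻ x, f x = f 0 := fun f => by
      rw [lintegral_unique, h1, mul_one]
      exact congrArg f (Subsingleton.elim _ _)
    simpa [hI] using H 0 0
  | succ n ih =>
    intro f g h hf hg hh H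
    have mp := (volume_preserving_piFinSuccAbove (fun _ : Fin (n+1) => ℝ) 0).symm
    set e := (MeasurableEquiv.piFinSuccAbove (fun _ : Fin (n+1) => ℝ) 0).symm with he
    have hlin : ∀ (x y : ℝ) (u v : Fin n → ℝ),
        e (a * x + b * y, a • u + b • v) = a • e (x, u) + b • e (y, v) := by
      intro x y u v
      ext i
      refine Fin.cases ?_ (fun i => ?_) i <;>
        simp [he, MeasurableEquiv.piFinSuccAbove_symm_apply, Fin.insertNthEquiv]
    have hm : ∀ {f : (Fin (n+1) → ℝ) → ℝ≥0∞}, Measurable f → Measurable fun z => f (e z) :=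
      fun hf => hf.comp e.measurable
    have hI : ∀ f : (Fin (n+1) → ℝ) → ℝ≥0∞, Measurable f →
        ∫⁻ x, f x = ∫⁻ x : ℝ, ∫⁻ u : Fin n → ℝ, f (e (x, u)) := by
      intro f hf
      rw [← mp.lintegral_comp hf, Measure.volume_eq_prod,
        lintegral_prod _ (hm hf).aemeasurable]
    rw [hI f hf, hI g hg, hI h hh]
    refine BM.pl_real a b ha hb hab _ _ _ (hm hf).lintegral_prod_right'
      (hm hg).lintegral_prod_right' (hm hh).lintegral_prod_right' fun x y => ?_
    refine ih _ _ _ ((hm hf).comp measurable_prodMk_left) ((hm hg).comp measurable_prodMk_left)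
      ((hm hh).comp measurable_prodMk_left) fun u v => ?_
    simp only [hlin]
    exact H _ _

/-- The dimension-free (multiplicative) form of Brunn–Minkowski. -/
lemma BM.pl_sets {n : ℕ} (a b : ℝ) (ha : 0 < a) (hb : 0 < b) (hab : a + b = 1)
    (A B C : Set (EuclideanSpace ℝ (Fin n)))
    (hA : MeasurableSet A) (hB : MeasurableSet B) (hC : MeasurableSet C)
    (h : ∀ x ∈ A, ∀ y ∈ B, a • x + b • y ∈ C) :
    volume A ^ a * volume B ^ b ≤ volume C := by
  have mp := PiLp.volume_preserving_toLp (Fin n)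
  have hm : ∀ {S : Set (EuclideanSpace ℝ (Fin n))}, MeasurableSet S →
      MeasurableSet ((WithLp.toLp 2 : (Fin n → ℝ) → _) ⁻¹' S) := fun hS => mp.measurable hS
  have hI : ∀ {S : Set (EuclideanSpace ℝ (Fin n))}, MeasurableSet S → volume S =
      ∫⁻ x, ((WithLp.toLp 2 : (Fin n → ℝ) → _) ⁻¹' S).indicator (1 : (Fin n → ℝ) → ℝ≥0∞) x := by
    intro S hS
    rw [lintegral_indicator_one (hm hS), mp.measure_preimage hS.nullMeasurableSet]
  rw [hI hA, hI hB, hI hC]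
  refine BM.pl a b ha hb hab n _ _ _ (measurable_one.indicator (hm hA))
    (measurable_one.indicator (hm hB)) (measurable_one.indicator (hm hC)) fun x y => ?_
  by_cases hx : WithLp.toLp 2 x ∈ A
  · by_cases hy : WithLp.toLp 2 y ∈ B
    · have hz : WithLp.toLp 2 (a • x + b • y) ∈ C := h _ hx _ hy
      simp [indicator_of_mem, mem_preimage, hx, hy, hz, -WithLp.toLp_add, -WithLp.toLp_smul]
    · simp [indicator, hy, hb]
  · simp [indicator, hx, ha]

/-- Brunn–Minkowski for sets of volume `α ^ n` and `β ^ n`. The multiplicative form is applied to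
the unit-volume sets `α⁻¹ • A`, `β⁻¹ • B` with weights proportional to `a * α` and `b * β`. -/
lemma BM.scaled {n : ℕ} (a b α β : ℝ) (ha : 0 < a) (hb : 0 < b)
    (hα : 0 < α) (hβ : 0 < β) (A B C : Set (EuclideanSpace ℝ (Fin n)))
    (hA : MeasurableSet A) (hB : MeasurableSet B) (hC : MeasurableSet C)
    (hAα : volume A = ENNReal.ofReal (α ^ n)) (hBβ : volume B = ENNReal.ofReal (β ^ n))
    (h : ∀ x ∈ A, ∀ y ∈ B, a • x + b • y ∈ C) :
    ENNReal.ofReal ((a * α + b * β) ^ n) ≤ volume C := by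
  have hm : 0 < a * α + b * β := by positivity
  set m := a * α + b * β with hmdef
  have h1 : ∀ {γ : ℝ} {S : Set (EuclideanSpace ℝ (Fin n))}, 0 < γ →
      volume S = ENNReal.ofReal (γ ^ n) → volume (γ⁻¹ • S) = 1 := by
    intro γ S hγ hS
    rw [Measure.addHaar_smul, hS, finrank_euclideanSpace_fin, abs_of_pos (by positivity),
      ← ENNReal.ofReal_mul (by positivity), ← mul_pow, inv_mul_cancel₀ hγ.ne']
    simp
  have key := BM.pl_sets (a * α / m) (b * β / m) (by positivity) (by positivity)
    (by rw [← add_div, div_self hm.ne']) (α⁻¹ • A) (β⁻¹ • B) (m⁻¹ • C)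
    (hA.const_smul₀ _) (hB.const_smul₀ _) (hC.const_smul₀ _) (by
      rintro _ ⟨x, hx, rfl⟩ _ ⟨y, hy, rfl⟩
      refine ⟨_, h x hx y hy, ?_⟩
      simp only [smul_add, smul_smul]
      congr 2 <;> field_simp)
  rw [h1 hα hAα, h1 hβ hBβ, ENNReal.one_rpow, ENNReal.one_rpow, one_mul, Measure.addHaar_smul,
    finrank_euclideanSpace_fin, abs_of_pos (by positivity)] at key
  calc ENNReal.ofReal (m ^ n) = ENNReal.ofReal (m ^ n) * 1 := (mul_one _).symm
    _ ≤ ENNReal.ofReal (m ^ n) * (ENNReal.ofReal (m⁻¹ ^ n) * volume C) := by gcongr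
    _ = volume C := by
      rw [← mul_assoc, ← ENNReal.ofReal_mul (by positivity), ← mul_pow, mul_inv_cancel₀ hm.ne']
      simp

lemma BM.le_root {n : ℕ} (hn : n ≠ 0) {m : ℝ} (hm : 0 ≤ m) {v : ℝ≥0∞} (hv : v ≠ ⊤)
    (h : ENNReal.ofReal (m ^ n) ≤ v) : m ≤ v.toReal ^ ((1 : ℝ) / n) := by
  rw [one_div, Real.le_rpow_inv_iff_of_pos hm ENNReal.toReal_nonneg (by positivity),
    Real.rpow_natCast]
  exact (ENNReal.ofReal_le_iff_le_toReal hv).1 h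

lemma BM.ofReal_root_pow {n : ℕ} (hn : n ≠ 0) {v : ℝ≥0∞} (hv : v ≠ ⊤) :
    v = ENNReal.ofReal ((v.toReal ^ ((1 : ℝ) / n)) ^ n) := by
  rw [one_div, Real.rpow_inv_natCast_pow ENNReal.toReal_nonneg hn, ENNReal.ofReal_toReal hv]

/-- The Brunn–Minkowski inequality for measurable sets of positive finite volume. -/
lemma BM.brunnMinkowski {n : ℕ} (hn : n ≠ 0) (a b : ℝ) (ha : 0 < a) (hb : 0 < b)
    (A B C : Set (EuclideanSpace ℝ (Fin n)))
    (hA : MeasurableSet A) (hB : MeasurableSet B) (hC : MeasurableSet C)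
    (hA0 : volume A ≠ 0) (hB0 : volume B ≠ 0)
    (hA' : volume A ≠ ⊤) (hB' : volume B ≠ ⊤) (hC' : volume C ≠ ⊤)
    (h : ∀ x ∈ A, ∀ y ∈ B, a • x + b • y ∈ C) :
    a * (volume A).toReal ^ ((1 : ℝ) / n) + b * (volume B).toReal ^ ((1 : ℝ) / n)
      ≤ (volume C).toReal ^ ((1 : ℝ) / n) := by
  have hα := Real.rpow_pos_of_pos (ENNReal.toReal_pos hA0 hA') ((1 : ℝ) / n)
  have hβ := Real.rpow_pos_of_pos (ENNReal.toReal_pos hB0 hB') ((1 : ℝ) / n)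
  exact BM.le_root hn (by positivity) hC' (BM.scaled a b _ _ ha hb hα hβ A B C hA hB hC
    (BM.ofReal_root_pow hn hA') (BM.ofReal_root_pow hn hB') h)

/-- The degenerate case of Brunn–Minkowski in which the second set is a point. -/
lemma BM.homothety {n : ℕ} (hn : n ≠ 0) (a : ℝ) (ha : 0 < a)
    (A C : Set (EuclideanSpace ℝ (Fin n))) (q : EuclideanSpace ℝ (Fin n))
    (hA' : volume A ≠ ⊤) (hC' : volume C ≠ ⊤) (h : ∀ x ∈ A, a • x + q ∈ C) :
    a * (volume A).toReal ^ ((1 : ℝ) / n) ≤ (volume C).toReal ^ ((1 : ℝ) / n) := by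
  refine BM.le_root hn (by positivity) hC' ?_
  rw [mul_pow, ENNReal.ofReal_mul (by positivity), ← BM.ofReal_root_pow hn hA']
  have hS : volume (q +ᵥ (a • A)) = ENNReal.ofReal (a ^ n) * volume A := by
    rw [measure_vadd, Measure.addHaar_smul, finrank_euclideanSpace_fin,
      abs_of_pos (by positivity)]
  rw [← hS]
  refine measure_mono ?_
  rintro _ ⟨_, ⟨x, hx, rfl⟩, rfl⟩
  simpa [add_comm] using h x hx

/-! ### Distance to the boundary of a convex set -/

/-- The ball about a point of `Ω` whose radius is the distance to the boundary is connected and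
misses the boundary, so it stays in `Ω`. -/
lemma BM.ball_subset {n : ℕ} {Ω : Set (EuclideanSpace ℝ (Fin n))} {x : EuclideanSpace ℝ (Fin n)}
    (hx : x ∈ Ω) : ball x (infDist x (frontier Ω)) ⊆ Ω := by
  rcases le_or_gt (infDist x (frontier Ω)) 0 with h0 | h0
  · rw [ball_eq_empty.2 h0]; exact empty_subset _
  have hd := disjoint_ball_infDist (s := frontier Ω) (x := x)
  have hsub : ball x (infDist x (frontier Ω)) ⊆ interior Ω ∪ (closure Ω)ᶜ := by
    intro y hy
    by_contra hcon
    simp only [mem_union, mem_compl_iff, not_or, not_not] at hcon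
    exact disjoint_left.1 hd hy ⟨hcon.2, hcon.1⟩
  refine ((convex_ball x _).isPreconnected.subset_left_of_subset_union isOpen_interior
    isClosed_closure.isOpen_compl ?_ hsub ⟨x, mem_ball_self h0, ?_⟩).trans interior_subset
  · exact disjoint_compl_right.mono_left (interior_subset.trans subset_closure)
  · exact (hsub (mem_ball_self h0)).resolve_right fun h => h (subset_closure hx)

/-- The distance to the boundary is concave on `Ω`, because a convex combination of balls contained
in `Ω` is a ball contained in `Ω`. -/
lemma BM.infDist_concave {n : ℕ} {Ω : Set (EuclideanSpace ℝ (Fin n))} (hΩo : IsOpen Ω)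
    (hΩc : Convex ℝ Ω) (hF : (frontier Ω).Nonempty) {x y : EuclideanSpace ℝ (Fin n)}
    (hx : x ∈ Ω) (hy : y ∈ Ω) {a b : ℝ} (ha : 0 < a) (hb : 0 < b) (hab : a + b = 1) :
    a * infDist x (frontier Ω) + b * infDist y (frontier Ω)
      ≤ infDist (a • x + b • y) (frontier Ω) := by
  have hpos : ∀ {x}, x ∈ Ω → 0 < infDist x (frontier Ω) := fun {x} hx =>
    (isClosed_frontier.notMem_iff_infDist_pos hF).1 fun h => hΩo.frontier_eq ▸ h |>.2 hx
  rw [le_infDist hF]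
  intro z hz
  by_contra! hlt
  have hz' : z ∈ ball (a • x + b • y) (a * infDist x (frontier Ω) + b * infDist y (frontier Ω)) :=
    by rwa [mem_ball, dist_comm]
  rw [← ball_add_ball (mul_pos ha (hpos hx)) (mul_pos hb (hpos hy))] at hz'
  have e : ∀ {c : ℝ} (x : EuclideanSpace ℝ (Fin n)) (r : ℝ), 0 < c →
      ball (c • x) (c * r) = c • ball x r := fun {c} x r hc => by
    rw [_root_.smul_ball hc.ne', Real.norm_of_nonneg hc.le]
  rw [e _ _ ha, e _ _ hb] at hz'
  obtain ⟨_, ⟨u, hu, rfl⟩, _, ⟨v, hv, rfl⟩, rfl⟩ := hz'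
  exact (hΩo.frontier_eq ▸ hz).2 (hΩc (BM.ball_subset hx hu) (BM.ball_subset hy hv) ha.le hb.le hab)

/-- The supremum defining the inradius is attained. -/
lemma BM.exists_incenter {n : ℕ} {Ω : Set (EuclideanSpace ℝ (Fin n))} (hΩo : IsOpen Ω)
    (hΩb : Bornology.IsBounded Ω) (hΩne : Ω.Nonempty) (hF : (frontier Ω).Nonempty) :
    ∃ x ∈ Ω, inradius Ω = infDist x (frontier Ω) := by
  obtain ⟨x, hx, hmax⟩ := hΩb.isCompact_closure.exists_isMaxOn hΩne.closure
    (continuous_infDist_pt (frontier Ω)).continuousOn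
  obtain ⟨p, hp⟩ := hΩne
  have hp0 : 0 < infDist p (frontier Ω) :=
    (isClosed_frontier.notMem_iff_infDist_pos hF).1 fun h => hΩo.frontier_eq ▸ h |>.2 hp
  have hxΩ : x ∈ Ω := by
    by_contra hcon
    have hxF : x ∈ frontier Ω := by rw [hΩo.frontier_eq]; exact ⟨hx, hcon⟩
    exact absurd (hmax (subset_closure hp)) (by simpa [infDist_zero_of_mem hxF] using hp0)
  refine ⟨x, hxΩ, IsGreatest.csSup_eq ⟨mem_image_of_mem _ hxΩ, ?_⟩⟩
  rintro _ ⟨y, hy, rfl⟩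
  exact hmax (subset_closure hy)

lemma BM.isOpen_innerParallel {n : ℕ} {Ω : Set (EuclideanSpace ℝ (Fin n))} (hΩo : IsOpen Ω)
    (r : ℝ) : IsOpen (innerParallel Ω r) :=
  hΩo.inter (isOpen_lt continuous_const (continuous_infDist_pt _))

/-! ### Concavity of the volume radius -/

theorem stmt_0 (n : ℕ) (hn : 2 ≤ n) (Ω : Set (EuclideanSpace ℝ (Fin n)))
    (hΩo : IsOpen Ω) (hΩb : Bornology.IsBounded Ω) (hΩc : Convex ℝ Ω)
    (hΩne : Ω.Nonempty) :
    ConcaveOn ℝ (Set.Icc 0 (inradius Ω))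
      (fun r => (volume (innerParallel Ω r)).toReal ^ ((1 : ℝ) / n)) := by
  have hn0 : n ≠ 0 := by omega
  have : Nonempty (Fin n) := ⟨⟨0, by omega⟩⟩
  have hF : (frontier Ω).Nonempty := nonempty_frontier_iff.2 ⟨hΩne, fun h =>
    NormedSpace.unbounded_univ ℝ (EuclideanSpace ℝ (Fin n)) (h ▸ hΩb)⟩
  obtain ⟨p, hpΩ, hpR⟩ := BM.exists_incenter hΩo hΩb hΩne hF
  have hfin : ∀ r, volume (innerParallel Ω r) ≠ ⊤ := fun r =>
    ((measure_mono (sep_subset _ _)).trans_lt hΩb.measure_lt_top).ne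
  have hpos : ∀ r, r < inradius Ω → volume (innerParallel Ω r) ≠ 0 := fun r hr =>
    ((BM.isOpen_innerParallel hΩo r).measure_pos volume ⟨p, hpΩ, hpR ▸ hr⟩).ne'
  have hzero : (volume (innerParallel Ω (inradius Ω))).toReal ^ ((1 : ℝ) / n) = 0 := by
    have : innerParallel Ω (inradius Ω) = ∅ := by
      refine eq_empty_of_forall_notMem fun x hx => ?_
      have hbdd : BddAbove ((fun x => infDist x (frontier Ω)) '' Ω) :=
        (hΩb.isCompact_closure.bddAbove_image
          (continuous_infDist_pt (frontier Ω)).continuousOn).mono (image_mono subset_closure)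
      exact absurd hx.2 (not_lt.2 (le_csSup hbdd (mem_image_of_mem _ hx.1)))
    rw [this, measure_empty, ENNReal.toReal_zero, Real.zero_rpow (by positivity)]
  -- When one endpoint is the inradius, use the homothety centred at the incenter `p`.
  have hend : ∀ r a b : ℝ, 0 < a → 0 < b → a + b = 1 →
      a * (volume (innerParallel Ω r)).toReal ^ ((1 : ℝ) / n) ≤
        (volume (innerParallel Ω (a * r + b * inradius Ω))).toReal ^ ((1 : ℝ) / n) := by
    intro r a b ha hb hab
    refine BM.homothety hn0 a ha _ _ (b • p) (hfin _) (hfin _) fun x hx => ⟨?_, ?_⟩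
    · exact hΩc hx.1 hpΩ ha.le hb.le hab
    · refine lt_of_lt_of_le ?_ (BM.infDist_concave hΩo hΩc hF hx.1 hpΩ ha hb hab)
      rw [hpR]
      have := mul_lt_mul_of_pos_left hx.2 ha
      linarith
  rw [concaveOn_iff_forall_pos]
  refine ⟨convex_Icc _ _, fun r hr s hs a b ha hb hab => ?_⟩
  simp only [smul_eq_mul]
  rcases hs.2.eq_or_lt with rfl | hsR
  · rw [hzero, mul_zero, add_zero]
    exact hend r a b ha hb hab
  rcases hr.2.eq_or_lt with rfl | hrR
  · rw [hzero, mul_zero, zero_add, add_comm (a * _)]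
    exact hend s b a hb ha (by linarith)
  refine BM.brunnMinkowski hn0 a b ha hb _ _ _ (BM.isOpen_innerParallel hΩo r).measurableSet
    (BM.isOpen_innerParallel hΩo s).measurableSet (BM.isOpen_innerParallel hΩo _).measurableSet
    (hpos r hrR) (hpos s hsR) (hfin _) (hfin _) (hfin _) fun x hx y hy => ⟨?_, ?_⟩
  · exact hΩc hx.1 hy.1 ha.le hb.le hab
  · refine lt_of_lt_of_le ?_ (BM.infDist_concave hΩo hΩc hF hx.1 hy.1 ha hb hab)
    have := mul_lt_mul_of_pos_left hx.2 ha
    have := mul_lt_mul_of_pos_left hy.2 hb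
    linarith
end
end

section
/- Let Ω ⊂ ℝⁿ be a nonempty open bounded convex set with inradius R_Ω, and let Ω_r be its inner parallel sets. Then the function ψ(r) := |∂Ω_r| / |Ω_r| (perimeter divided by volume) is monotone nondecreasing on [0, R_Ω), and ψ(r) → +∞ as r → R_Ω⁻. -/
/-!
The volume `V(r)` of the inner parallel sets is logarithmically concave and has derivative `-P(r)`,
where `P(r)` is the perimeter, so `P / V = -(log V)'` is nondecreasing. Differentiability of `V` is
replaced by two one-sided estimates over a depth `h > 0`,

  `h P(r + h) ≤ V(r) - V(r + h) ≤ h P(r)`,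

together with `(1 - θ)^(n - 1) P(r) ≤ P(r + θ (s - r))`, which follows from the monotonicity of the
perimeter of convex sets (`hausdorff_frontier_mono`), since the inner parallel set at depth
`r + θ (s - r)` contains a copy of the one at depth `r` shrunk by `1 - θ`. If `r < s` and
`h = θ (s - r)`, log-concavity says that the fraction of volume lost between `r` and `r + h` is at
most the fraction lost between `s` and `s + h`. Hence `(1 - θ)^(n - 1) P(r) / V(r) ≤ P(s) / V(s)`,
and `θ → 0` gives monotonicity. The upper estimate with `h = R - s`, where `R` is the inradius and
`V(R) = 0`, gives `P(s) / V(s) ≥ 1 / (R - s)`, hence divergence.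

The two estimates on `V` (`volume_le_innerParallel_add`, `volume_add_le_thickening`) are proved for
polytopes by means of the prisms erected over the facets, inwards and outwards, and are transferred
to convex sets by an approximation up to homothety. Log-concavity (`volume_mul_volume_le`) comes from
the multiplicative Brunn–Minkowski inequality (`brunn_minkowski`), which is a case of the
Prékopa–Leindler inequality (`prekopa_leindler`), and from the concavity of the distance to the
boundary (`combo_mem_innerParallel`).

The perimeter is measured by `μHE[m]`, the Hausdorff measure normalised to agree with Lebesgue
measure, on which the prism formula rests. It differs from `μH[m]` by a constant factor, which
affects neither assertion.
-/

open MeasureTheory Metric Set Filter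

noncomputable section

/-- The perimeter of a set: the `(n-1)`-dimensional Hausdorff measure of its boundary. -/
def perim {n : ℕ} (A : Set (EuclideanSpace ℝ (Fin n))) : ℝ :=
  (μH[(n : ℝ) - 1] (frontier A)).toReal

open scoped RealInnerProductSpace ENNReal

local notation "𝔼" n => EuclideanSpace ℝ (Fin n)

theorem inter_frontier_nonempty_of_preconnected {X : Type*} [TopologicalSpace X] {t s : Set X}
    (ht : IsPreconnected t) (h1 : (t ∩ s).Nonempty) (h2 : (t ∩ sᶜ).Nonempty) :
    (t ∩ frontier s).Nonempty := by
  by_contra hne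
  have key : ∀ x ∈ t, x ∉ frontier s := fun x hx hf => hne ⟨x, hx, hf⟩
  have hc : ∀ x ∈ t, x ∈ closure s → x ∈ interior s := fun x hx h => by
    by_contra h'
    exact key x hx ⟨h, h'⟩
  obtain ⟨x, -, hx1, hx2⟩ := ht (interior s) (closure s)ᶜ isOpen_interior isClosed_closure.isOpen_compl
    (fun x hx => by
      by_cases h : x ∈ closure s
      · exact Or.inl (hc x hx h)
      · exact Or.inr h)
    (by
      obtain ⟨x, hx, hs⟩ := h1
      exact ⟨x, hx, hc x hx (subset_closure hs)⟩)
    (by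
      obtain ⟨x, hx, hs⟩ := h2
      exact ⟨x, hx, fun h => hs (interior_subset (hc x hx h))⟩)
  exact hx2 (interior_subset_closure hx1)

/-! ### Inner parallel sets -/

section metric

variable {m : ℕ} {K L : Set (𝔼 (m + 1))}

theorem ball_infDist_frontier_subset {x : 𝔼 (m + 1)} (hx : x ∈ K) :
    ball x (infDist x (frontier K)) ⊆ K := by
  intro y hy
  by_contra hyK
  have hpos : 0 < infDist x (frontier K) := dist_nonneg.trans_lt hy
  obtain ⟨z, hz, hzf⟩ := inter_frontier_nonempty_of_preconnected
    (convex_ball x (infDist x (frontier K))).isPreconnected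
    ⟨x, mem_ball_self hpos, hx⟩ ⟨y, hy, hyK⟩
  have := infDist_le_dist_of_mem (x := x) hzf
  rw [mem_ball, dist_comm] at hz
  linarith

theorem frontier_nonempty_of_bounded (hKb : Bornology.IsBounded K) (hKne : K.Nonempty) :
    (frontier K).Nonempty := by
  rw [nonempty_frontier_iff]
  refine ⟨hKne, ?_⟩
  rintro rfl
  exact NormedSpace.unbounded_univ ℝ (𝔼 (m + 1)) hKb

theorem le_infDist_frontier (hKo : IsOpen K) (hKb : Bornology.IsBounded K) (hKne : K.Nonempty)
    {x : 𝔼 (m + 1)} {ρ : ℝ} (h : ball x ρ ⊆ K) : ρ ≤ infDist x (frontier K) := by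
  rw [le_infDist (frontier_nonempty_of_bounded hKb hKne)]
  intro y hy
  by_contra hlt
  push Not at hlt
  have : y ∈ K := h (by rwa [mem_ball, dist_comm])
  rw [hKo.frontier_eq] at hy
  exact hy.2 this

theorem isOpen_innerParallel (hKo : IsOpen K) (r : ℝ) : IsOpen (innerParallel K r) :=
  hKo.inter (isOpen_lt continuous_const (continuous_infDist_pt _))

theorem innerParallel_subset (r : ℝ) : innerParallel K r ⊆ K := fun _ h => h.1

/-- The distance to the boundary is concave on a convex set, in the form of an inclusion between
inner parallel sets. -/
theorem combo_mem_innerParallel (hKo : IsOpen K) (hKb : Bornology.IsBounded K) (hKc : Convex ℝ K)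
    {r s a b : ℝ} (ha : 0 ≤ a) (hb : 0 ≤ b) (hab : a + b = 1) {x y : 𝔼 (m + 1)}
    (hx : x ∈ innerParallel K r) (hy : y ∈ innerParallel K s) :
    a • x + b • y ∈ innerParallel K (a * r + b * s) := by
  refine ⟨hKc hx.1 hy.1 ha hb hab, ?_⟩
  have h : a * infDist x (frontier K) + b * infDist y (frontier K) ≤
      infDist (a • x + b • y) (frontier K) := by
    apply le_infDist_frontier hKo hKb ⟨x, hx.1⟩
    set p := infDist x (frontier K)
    set q := infDist y (frontier K)
    have hp : 0 ≤ p := infDist_nonneg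
    have hq : 0 ≤ q := infDist_nonneg
    intro z hz
    set c := a * p + b * q with hc
    have hcpos : 0 < c := dist_nonneg.trans_lt hz
    set w := z - (a • x + b • y) with hw
    have hwn : ‖w‖ < c := by rwa [mem_ball, dist_eq_norm] at hz
    -- a point of the ball of radius `a * p + b * q` around the combination of `x` and `y` is the
    -- same combination of points of the balls of radius `p` around `x` and `q` around `y`
    have hz' : z = a • (x + (p / c) • w) + b • (y + (q / c) • w) := by
      have : a • (x + (p / c) • w) + b • (y + (q / c) • w)
          = (a • x + b • y) + ((a * p + b * q) / c) • w := by
        rw [add_div, add_smul, mul_div_assoc, mul_div_assoc, mul_smul, mul_smul]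
        module
      rw [this, ← hc, div_self hcpos.ne', one_smul, hw]
      abel
    have aux : ∀ u : 𝔼 (m + 1), u ∈ K → u + (infDist u (frontier K) / c) • w ∈ K := by
      intro u hu
      rcases (infDist_nonneg (x := u) (s := frontier K)).eq_or_lt with h0 | h0
      · rw [← h0]; simpa using hu
      · apply ball_infDist_frontier_subset hu
        rw [mem_ball, dist_eq_norm, add_sub_cancel_left, norm_smul, Real.norm_of_nonneg (by positivity),
          div_mul_eq_mul_div, div_lt_iff₀ hcpos]
        exact mul_lt_mul_of_pos_left hwn h0
    rw [hz']
    exact hKc (aux x hx.1) (aux y hy.1) ha hb hab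
  refine lt_of_lt_of_le ?_ h
  have h1 := hx.2
  have h2 := hy.2
  rcases ha.eq_or_lt with rfl | ha'
  · have : b = 1 := by linarith
    subst this; linarith
  · nlinarith

theorem convex_innerParallel (hKo : IsOpen K) (hKb : Bornology.IsBounded K) (hKc : Convex ℝ K)
    (r : ℝ) : Convex ℝ (innerParallel K r) := by
  intro x hx y hy a b ha hb hab
  have := combo_mem_innerParallel hKo hKb hKc ha hb hab hx hy
  rwa [← add_mul, hab, one_mul] at this

theorem innerParallel_mono (hKo : IsOpen K) (hKb : Bornology.IsBounded K) (hLK : L ⊆ K)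
    (r : ℝ) : innerParallel L r ⊆ innerParallel K r := fun x hx =>
  ⟨hLK hx.1, hx.2.trans_le (le_infDist_frontier hKo hKb ⟨x, hLK hx.1⟩
    ((ball_infDist_frontier_subset hx.1).trans hLK))⟩

/-- If `x ∈ K_r`, the ball around `x` of radius `r + dist(x, ∂K_r)` lies in `K`: each
of its points is within `r` of a point of `K_r` on the segment to `x`. -/
theorem innerParallel_innerParallel_subset (hKo : IsOpen K) (hKb : Bornology.IsBounded K)
    {r h : ℝ} (hr : 0 ≤ r) :
    innerParallel (innerParallel K r) h ⊆ innerParallel K (r + h) := by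
  intro x hx
  refine ⟨hx.1.1, ?_⟩
  set ρ := infDist x (frontier (innerParallel K r)) with hρ
  have hρh : h < ρ := hx.2
  refine lt_of_lt_of_le (add_lt_add_right hρh r)
    (le_infDist_frontier hKo hKb ⟨x, hx.1.1⟩ fun z hz => ?_)
  rcases (infDist_nonneg (x := x) (s := frontier (innerParallel K r))).eq_or_lt with h0 | h0
  · rw [hρ, ← h0, add_zero] at hz
    exact ball_infDist_frontier_subset hx.1.1 (ball_subset_ball hx.1.2.le hz)
  · rw [← hρ] at h0
    have hpos : 0 < r + ρ := by linarith
    rw [mem_ball, dist_eq_norm] at hz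
    set u := x + (ρ / (r + ρ)) • (z - x) with hu
    have hu1 : u ∈ innerParallel K r := by
      apply ball_infDist_frontier_subset hx.1
      rw [mem_ball, dist_eq_norm, hu, add_sub_cancel_left, norm_smul,
        Real.norm_of_nonneg (by positivity), ← hρ, div_mul_eq_mul_div, div_lt_iff₀ hpos]
      exact mul_lt_mul_of_pos_left hz h0
    apply ball_infDist_frontier_subset hu1.1
    rw [mem_ball, dist_eq_norm]
    have : z - u = (r / (r + ρ)) • (z - x) := by
      have h1 : r / (r + ρ) = 1 - ρ / (r + ρ) := by field_simp; ring
      rw [h1, hu]; module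
    refine lt_of_le_of_lt ?_ hu1.2
    rw [this, norm_smul, Real.norm_of_nonneg (by positivity), div_mul_eq_mul_div, div_le_iff₀ hpos]
    exact mul_le_mul_of_nonneg_left hz.le hr

theorem thickening_innerParallel_subset {r h : ℝ} (hr : 0 ≤ r) :
    thickening h (innerParallel K (r + h)) ⊆ innerParallel K r := by
  intro z hz
  obtain ⟨x, hx, hzx⟩ := mem_thickening_iff.1 hz
  have h1 := infDist_le_infDist_add_dist (s := frontier K) (x := x) (y := z)
  rw [dist_comm] at h1
  have h2 := hx.2
  exact ⟨ball_infDist_frontier_subset hx.1 (by rw [mem_ball]; linarith), by linarith⟩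

end metric

/-! ### Monotonicity of the perimeter -/

section perimeter

variable {m : ℕ} {K L : Set (𝔼 (m + 1))}

/-- The nearest point projection onto a convex set is a contraction: the hypotheses hold when
`z - y` and `z' - y'` are outer normals at the points `y` and `y'` of the set. -/
theorem norm_le_of_normal {y y' z z' : 𝔼 (m + 1)} (h : ⟪z - y, y' - y⟫ ≤ 0)
    (h' : ⟪z' - y', y - y'⟫ ≤ 0) : ‖y' - y‖ ≤ ‖z' - z‖ := by
  have e : ⟪z' - z, y' - y⟫ = ‖y' - y‖ ^ 2 - ⟪z' - y', y - y'⟫ - ⟪z - y, y' - y⟫ := by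
    rw [← real_inner_self_eq_norm_sq, ← neg_sub y' y, inner_neg_right, sub_neg_eq_add,
      ← inner_add_left, ← inner_sub_left]
    congr 1; abel
  have h1 := real_inner_le_norm (z' - z) (y' - y)
  rcases (norm_nonneg (y' - y)).eq_or_lt with h0 | h0
  · rw [← h0]; positivity
  · nlinarith

/-- A unit vector separating an open convex set from a point outside it. On the boundary it is an
outer normal. -/
theorem exists_normal (hKo : IsOpen K) (hKc : Convex ℝ K) (hKne : K.Nonempty) {y : 𝔼 (m + 1)}
    (hy : y ∉ K) : ∃ a : 𝔼 (m + 1), ‖a‖ = 1 ∧ ∀ x ∈ K, ⟪a, x⟫ < ⟪a, y⟫ := by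
  obtain ⟨f, hf⟩ := geometric_hahn_banach_open_point hKc hKo hy
  set v := (InnerProductSpace.toDual ℝ (𝔼 (m + 1))).symm f with hv
  have hfv : ∀ x, f x = ⟪v, x⟫ := fun x => by
    rw [hv, InnerProductSpace.toDual_symm_apply]
  have hv0 : 0 < ‖v‖ := by
    rw [norm_pos_iff]
    intro h0
    obtain ⟨x, hx⟩ := hKne
    have := hf x hx
    rw [hfv, hfv, h0] at this
    simp at this
  refine ⟨‖v‖⁻¹ • v, ?_, fun x hx => ?_⟩
  · rw [norm_smul, norm_inv, norm_norm, inv_mul_cancel₀ hv0.ne']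
  · rw [real_inner_smul_left, real_inner_smul_left, ← hfv, ← hfv]
    exact mul_lt_mul_of_pos_left (hf x hx) (inv_pos.2 hv0)

/-- Perimeter is monotone under inclusion: the nearest point projection onto a convex set
contained in `L` maps part of the boundary of `L` onto the boundary of the convex set. -/
theorem hausdorff_frontier_mono (hKo : IsOpen K) (hKc : Convex ℝ K) (hKne : K.Nonempty)
    (hLb : Bornology.IsBounded L) (hKL : K ⊆ L) :
    μHE[m] (frontier K) ≤ μHE[m] (frontier L) := by
  -- push each boundary point of `K` outwards along a normal until it meets the boundary of `L`
  have hex : ∀ y : frontier K, ∃ z ∈ frontier L, ∀ w ∈ closure K, ⟪z - y, w - y⟫ ≤ 0 := by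
    rintro ⟨y, hy⟩
    have hyK : y ∉ K := by rw [hKo.frontier_eq] at hy; exact hy.2
    obtain ⟨a, ha, hay⟩ := exists_normal hKo hKc hKne hyK
    have hay' : ∀ w ∈ closure K, ⟪a, w⟫ ≤ ⟪a, y⟫ := by
      intro w hw
      exact closure_minimal (t := {w | ⟪a, w⟫ ≤ ⟪a, y⟫}) (fun x hx => (hay x hx).le)
        (isClosed_le (by fun_prop) continuous_const) hw
    let ray : Set (𝔼 (m + 1)) := (fun t : ℝ => y + t • a) '' Ici 0
    have hray : IsPreconnected ray := isPreconnected_Ici.image _ (by fun_prop)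
    have hyL : y ∈ closure L := closure_mono hKL hy.1
    have hz : (ray ∩ frontier (closure L)).Nonempty := by
      apply inter_frontier_nonempty_of_preconnected hray
      · exact ⟨y, ⟨0, self_mem_Ici, by simp⟩, hyL⟩
      · obtain ⟨R, hR⟩ := hLb.closure.subset_closedBall y
        refine ⟨y + (|R| + 1) • a, ⟨|R| + 1, by rw [mem_Ici]; positivity, rfl⟩, fun h => ?_⟩
        have := hR h
        rw [mem_closedBall, dist_eq_norm, add_sub_cancel_left, norm_smul, ha, mul_one,
          Real.norm_of_nonneg (by positivity)] at this
        linarith [le_abs_self R]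
    obtain ⟨z, ⟨t, ht, rfl⟩, hzL⟩ := hz
    refine ⟨y + t • a, frontier_closure_subset hzL, fun w hw => ?_⟩
    rw [add_sub_cancel_left, real_inner_smul_left, inner_sub_right]
    exact mul_nonpos_of_nonneg_of_nonpos ht (by linarith [hay' w hw])
  choose f hfL hf using hex
  have hanti : AntilipschitzWith 1 f := by
    apply AntilipschitzWith.of_le_mul_dist
    intro y y'
    rw [NNReal.coe_one, one_mul, Subtype.dist_eq, dist_comm, dist_comm (f y), dist_eq_norm,
      dist_eq_norm]
    exact norm_le_of_normal (hf y _ y'.2.1) (hf y' _ y.2.1)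
  have h1 := hanti.le_hausdorffMeasure_image (d := (m : ℝ)) (by positivity) univ
  rw [ENNReal.coe_one, ENNReal.one_rpow, one_mul, image_univ] at h1
  have h2 := (isometry_subtype_coe (s := frontier K)).hausdorffMeasure_image
    (d := (m : ℝ)) (Or.inl (by positivity)) univ
  rw [image_univ, Subtype.range_coe] at h2
  simp only [Measure.euclideanHausdorffMeasure_def, Measure.smul_apply]
  have h3 : μH[m] (frontier K) ≤ μH[m] (frontier L) := by
    rw [h2]
    exact h1.trans (measure_mono (range_subset_iff.2 hfL))
  rw [ENNReal.smul_def, ENNReal.smul_def]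
  exact mul_le_mul' le_rfl h3

end perimeter

/-! ### Prisms -/

section prism

variable {m : ℕ}

/-- The prism over the base `A` in the direction `a`, with heights in `I`. -/
def prism (a : 𝔼 (m + 1)) (A : Set (𝔼 (m + 1))) (I : Set ℝ) : Set (𝔼 (m + 1)) :=
  {z | ∃ y ∈ A, ∃ s ∈ I, z = y + s • a}

variable {a : 𝔼 (m + 1)} {A : Set (𝔼 (m + 1))} {b : ℝ} {I : Set ℝ}

theorem prism_eq (ha : ‖a‖ = 1) (hAb : ∀ y ∈ A, ⟪a, y⟫ = b) :
    prism a A I = {z | ⟪a, z⟫ - b ∈ I ∧ z - (⟪a, z⟫ - b) • a ∈ A} := by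
  ext z
  constructor
  · rintro ⟨y, hy, s, hs, rfl⟩
    have : ⟪a, y + s • a⟫ - b = s := by
      rw [inner_add_right, hAb y hy, real_inner_smul_right, real_inner_self_eq_norm_sq, ha]
      ring
    refine ⟨by rwa [this], ?_⟩
    rwa [this, add_sub_cancel_right]
  · rintro ⟨h1, h2⟩
    exact ⟨_, h2, _, h1, by abel⟩

theorem measurableSet_prism (ha : ‖a‖ = 1) (hAb : ∀ y ∈ A, ⟪a, y⟫ = b) (hA : MeasurableSet A)
    (hI : MeasurableSet I) : MeasurableSet (prism a A I) := by
  rw [prism_eq ha hAb]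
  have h1 : Measurable fun z : 𝔼 (m + 1) => ⟪a, z⟫ - b :=
    Continuous.measurable (by fun_prop)
  have h2 : Measurable fun z : 𝔼 (m + 1) => z - (⟪a, z⟫ - b) • a :=
    Continuous.measurable (by fun_prop)
  exact (h1 hI).inter (h2 hA)

theorem volume_prism (ha : ‖a‖ = 1) (hAb : ∀ y ∈ A, ⟪a, y⟫ = b) (hA : MeasurableSet A)
    (hI : MeasurableSet I) : volume (prism a A I) = volume I * μHE[m] A := by
  have ha0 : a ≠ 0 := by rintro rfl; simp at ha
  rw [← InnerProductSpace.euclideanHausdorffMeasure_eq_volume,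
    EuclideanGeometry.euclideanHausdorffMeasure_eq_lintegral (b • a) ha0
      (measurableSet_prism ha hAb hA hI), finrank_euclideanSpace_fin, Nat.add_sub_cancel]
  have hslice : ∀ x : ℝ, μHE[m] (prism a A I ∩
      (AffineSubspace.mk' (x • a +ᵥ b • a) (Submodule.span ℝ {a})ᗮ : Set (𝔼 (m + 1))))
      = I.indicator (fun _ => μHE[m] A) x := by
    intro x
    have hmem : ∀ z : 𝔼 (m + 1),
        z ∈ (AffineSubspace.mk' (x • a +ᵥ b • a) (Submodule.span ℝ {a})ᗮ : Set (𝔼 (m + 1))) ↔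
        ⟪a, z⟫ - b = x := by
      intro z
      rw [SetLike.mem_coe, AffineSubspace.mem_mk', Submodule.mem_orthogonal_singleton_iff_inner_right,
        vsub_eq_sub, vadd_eq_add, inner_sub_right, inner_add_right, real_inner_smul_right,
        real_inner_smul_right, real_inner_self_eq_norm_sq, ha]
      constructor <;> intro h <;> linarith
    by_cases hx : x ∈ I
    · rw [indicator_of_mem hx]
      have : prism a A I ∩
          (AffineSubspace.mk' (x • a +ᵥ b • a) (Submodule.span ℝ {a})ᗮ : Set (𝔼 (m + 1)))
          = (IsometryEquiv.addRight (x • a)) '' A := by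
        ext z
        rw [mem_inter_iff, hmem, prism_eq ha hAb]
        constructor
        · rintro ⟨⟨-, h2⟩, h3⟩
          rw [h3] at h2
          exact ⟨_, h2, by simp⟩
        · rintro ⟨y, hy, rfl⟩
          have : ⟪a, y + x • a⟫ - b = x := by
            rw [inner_add_right, hAb y hy, real_inner_smul_right, real_inner_self_eq_norm_sq, ha]
            ring
          simp only [IsometryEquiv.addRight_apply, mem_ofPred_eq, this, add_sub_cancel_right]
          exact ⟨⟨hx, hy⟩, trivial⟩
      rw [this]
      exact (IsometryEquiv.isometry _).euclideanHausdorffMeasure_image _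
    · rw [indicator_of_notMem hx]
      convert measure_empty (μ := (μHE[m] : Measure (𝔼 (m + 1))))
      rw [eq_empty_iff_forall_notMem]
      rintro z ⟨h1, h2⟩
      rw [hmem] at h2
      rw [prism_eq ha hAb] at h1
      exact hx (h2 ▸ h1.1)
  simp_rw [hslice]
  rw [lintegral_indicator_const hI, enorm_eq_nnnorm]
  have : ‖a‖₊ = 1 := by ext; simpa using ha
  rw [this, ENNReal.coe_one, one_mul, mul_comm]

end prism

/-! ### Volume of the parallel sets of a polytope -/

section polytope

variable {m N : ℕ}

/-- The open polytope cut out by the half-spaces `⟪a i, x⟫ < b i`. -/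
def polytope (a : Fin N → 𝔼 (m + 1)) (b : Fin N → ℝ) : Set (𝔼 (m + 1)) :=
  {x | ∀ i, ⟪a i, x⟫ < b i}

variable {a : Fin N → 𝔼 (m + 1)} {b : Fin N → ℝ}

theorem isOpen_polytope : IsOpen (polytope a b) := by
  rw [polytope, ofPred_forall]
  exact isOpen_iInter_of_finite fun i => isOpen_lt (by fun_prop) continuous_const

theorem convex_polytope : Convex ℝ (polytope a b) := by
  rw [polytope, ofPred_forall]
  exact convex_iInter fun i => convex_halfSpace_lt
    ⟨fun x y => inner_add_right _ _ _, fun c x => real_inner_smul_right _ _ _⟩ _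

theorem inner_le_of_mem_closure_polytope {x : 𝔼 (m + 1)} (hx : x ∈ closure (polytope a b))
    (i : Fin N) : ⟪a i, x⟫ ≤ b i :=
  closure_minimal (t := {x | ⟪a i, x⟫ ≤ b i}) (fun _ hy => (hy i).le)
    (isClosed_le (by fun_prop) continuous_const) hx

/-- The boundary of a polytope is a disjoint union of measurable pieces, each contained in one of
the bounding hyperplanes. -/
theorem exists_facets (a : Fin N → 𝔼 (m + 1)) (b : Fin N → ℝ) :
    ∃ G : Fin N → Set (𝔼 (m + 1)), (∀ i, MeasurableSet (G i)) ∧ Pairwise (Function.onFun Disjoint G) ∧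
      ⋃ i, G i = frontier (polytope a b) ∧ ∀ i, ∀ y ∈ G i, ⟪a i, y⟫ = b i := by
  let F : Fin N → Set (𝔼 (m + 1)) := fun i => frontier (polytope a b) ∩ {y | ⟪a i, y⟫ = b i}
  have hF : ∀ i, MeasurableSet (F i) := fun i =>
    (isClosed_frontier.inter (isClosed_eq (by fun_prop) continuous_const)).measurableSet
  refine ⟨fun i => F i \ ⋃ j : Fin N, ⋃ _ : j < i, F j, fun i => (hF i).diff
    (MeasurableSet.iUnion fun j => MeasurableSet.iUnion fun _ => hF j), ?_, ?_,
    fun i y hy => hy.1.2⟩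
  · have key : ∀ i j : Fin N, i < j → Disjoint (F i \ ⋃ k : Fin N, ⋃ _ : k < i, F k)
        (F j \ ⋃ k : Fin N, ⋃ _ : k < j, F k) := by
      intro i j hij
      rw [Set.disjoint_left]
      rintro y hy ⟨-, h⟩
      exact h (mem_iUnion₂.2 ⟨i, hij, hy.1⟩)
    intro i j hij
    rcases lt_or_gt_of_ne hij with h | h
    · exact key i j h
    · exact (key j i h).symm
  · apply subset_antisymm
    · exact iUnion_subset fun i y hy => hy.1.1
    · intro y hy
      have hne : {i | y ∈ F i}.Nonempty := by
        have h2 := hy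
        rw [isOpen_polytope.frontier_eq] at h2
        have h3 : ¬ ∀ i, ⟪a i, y⟫ < b i := h2.2
        push Not at h3
        obtain ⟨i, hi⟩ := h3
        exact ⟨i, hy, le_antisymm (inner_le_of_mem_closure_polytope h2.1 i) hi⟩
      obtain ⟨i, hi, hmin⟩ := wellFounded_lt.has_min _ hne
      refine mem_iUnion.2 ⟨i, hi, fun h => ?_⟩
      obtain ⟨j, hj, hyj⟩ := mem_iUnion₂.1 h
      exact hmin j hyj hj

/-- The outer prisms over the facets of a polytope are disjoint. -/
theorem polytope_outer (ha : ∀ i, ‖a i‖ = 1) {h : ℝ} (h0 : 0 < h) :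
    volume (polytope a b) + ENNReal.ofReal h * μHE[m] (frontier (polytope a b)) ≤
      volume (thickening h (polytope a b)) := by
  obtain ⟨G, hGm, hGd, hGU, hGb⟩ := exists_facets a b
  have hGf : ∀ i, G i ⊆ frontier (polytope a b) := fun i => hGU ▸ subset_iUnion G i
  have hPm : ∀ i, MeasurableSet (prism (a i) (G i) (Ioo 0 h)) := fun i =>
    measurableSet_prism (ha i) (hGb i) (hGm i) measurableSet_Ioo
  have hPd : Pairwise (Function.onFun Disjoint fun i => prism (a i) (G i) (Ioo 0 h)) := by
    intro i j hij
    rw [Function.onFun, Set.disjoint_left]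
    rintro z ⟨y, hy, s, hs, rfl⟩ ⟨y', hy', s', hs', e⟩
    have hn : ∀ i, ∀ y ∈ G i, ∀ s ∈ Ioo 0 h, ∀ w ∈ closure (polytope a b),
        ⟪y + s • a i - y, w - y⟫ ≤ 0 := by
      intro i y hy s hs w hw
      rw [add_sub_cancel_left, real_inner_smul_left, inner_sub_right, hGb i y hy]
      exact mul_nonpos_of_nonneg_of_nonpos hs.1.le
        (sub_nonpos.2 (inner_le_of_mem_closure_polytope hw i))
    have := norm_le_of_normal (hn i y hy s hs y' (hGf j hy').1) (hn j y' hy' s' hs' y (hGf i hy).1)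
    rw [e, sub_self, norm_zero] at this
    have hyy : y' = y := sub_eq_zero.1 (norm_le_zero_iff.1 this)
    subst hyy
    exact Set.disjoint_left.1 (hGd hij) hy hy'
  have hQP : Disjoint (polytope a b) (⋃ i, prism (a i) (G i) (Ioo 0 h)) := by
    rw [Set.disjoint_left]
    intro z hz hz'
    obtain ⟨i, y, hy, s, hs, rfl⟩ := mem_iUnion.1 hz'
    have h1 := hz i
    rw [inner_add_right, hGb i y hy, real_inner_smul_right, real_inner_self_eq_norm_sq, ha] at h1
    linarith [hs.1]
  have hsum : volume (⋃ i, prism (a i) (G i) (Ioo 0 h)) =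
      ENNReal.ofReal h * μHE[m] (frontier (polytope a b)) := by
    rw [measure_iUnion hPd hPm, ← hGU, measure_iUnion hGd hGm, ← ENNReal.tsum_mul_left]
    congr 1; ext i
    rw [volume_prism (ha i) (hGb i) (hGm i) measurableSet_Ioo, Real.volume_Ioo, sub_zero]
  rw [← hsum, ← measure_union hQP (MeasurableSet.iUnion hPm)]
  refine measure_mono (union_subset (self_subset_thickening h0 _) (iUnion_subset fun i => ?_))
  rintro z ⟨y, hy, s, hs, rfl⟩
  rw [← thickening_closure, mem_thickening_iff]
  refine ⟨y, (hGf i hy).1, ?_⟩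
  rw [dist_eq_norm, add_sub_cancel_left, norm_smul, ha, mul_one, Real.norm_of_nonneg hs.1.le]
  exact hs.2

/-- The part of a polytope within distance `h` of its boundary is covered by the inner prisms over
the facets. -/
theorem polytope_inner (ha : ∀ i, ‖a i‖ = 1) (hb : Bornology.IsBounded (polytope a b)) (h : ℝ) :
    volume (polytope a b) ≤ volume (innerParallel (polytope a b) h) +
      ENNReal.ofReal h * μHE[m] (frontier (polytope a b)) := by
  obtain ⟨G, hGm, hGd, hGU, hGb⟩ := exists_facets a b
  have hGb' : ∀ i, ∀ y ∈ G i, ⟪-a i, y⟫ = -b i := fun i y hy => by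
    rw [inner_neg_left, hGb i y hy]
  have ha' : ∀ i, ‖-a i‖ = 1 := fun i => by rw [norm_neg, ha]
  have hsum : volume (⋃ i, prism (-a i) (G i) (Ioc 0 h)) ≤
      ENNReal.ofReal h * μHE[m] (frontier (polytope a b)) := by
    refine (measure_iUnion_le _).trans (le_of_eq ?_)
    rw [← hGU, measure_iUnion hGd hGm, ← ENNReal.tsum_mul_left]
    congr 1; ext i
    rw [volume_prism (ha' i) (hGb' i) (hGm i) measurableSet_Ioc, Real.volume_Ioc, sub_zero]
  refine le_trans (measure_mono ?_) ((measure_union_le _ _).trans (add_le_add le_rfl hsum))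
  intro x hx
  by_cases hxi : x ∈ innerParallel (polytope a b) h
  · exact Or.inl hxi
  right
  have hd : infDist x (frontier (polytope a b)) ≤ h := by
    by_contra hlt
    exact hxi ⟨hx, not_le.1 hlt⟩
  obtain ⟨y, hy, hxy⟩ := isClosed_frontier.exists_infDist_eq_dist
    (frontier_nonempty_of_bounded hb ⟨x, hx⟩) x
  set d := infDist x (frontier (polytope a b)) with hdd
  obtain ⟨i, hi⟩ := mem_iUnion.1 (hGU ▸ hy)
  have hdpos : 0 < d := by
    rw [hxy, dist_pos]
    rintro rfl
    rw [isOpen_polytope.frontier_eq] at hy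
    exact hy.2 hx
  -- the ball of radius `d` around `x` stays on the inner side of the facet containing `y`
  have h1 : ⟪a i, x⟫ + d ≤ b i := by
    have hcl : x + d • a i ∈ closure (polytope a b) := by
      apply closure_mono (ball_infDist_frontier_subset hx)
      rw [closure_ball _ (by rw [← hdd]; exact hdpos.ne'), mem_closedBall, dist_eq_norm,
        add_sub_cancel_left, norm_smul, ha, mul_one, Real.norm_of_nonneg hdpos.le]
    have := inner_le_of_mem_closure_polytope hcl i
    rwa [inner_add_right, real_inner_smul_right, real_inner_self_eq_norm_sq, ha, one_pow,
      mul_one] at this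
  have hyn : ‖y - x‖ = d := by rw [hxy, dist_comm, dist_eq_norm]
  have h2 : y - x = d • a i := by
    rw [← sub_eq_zero, ← norm_eq_zero, ← sq_nonpos_iff, norm_sub_sq_real, hyn, norm_smul, ha,
      Real.norm_of_nonneg hdpos.le, real_inner_smul_right, real_inner_comm, inner_sub_right,
      hGb i y hi]
    nlinarith
  refine mem_iUnion.2 ⟨i, y, hi, d, ⟨hdpos, hd⟩, ?_⟩
  rw [smul_neg, ← h2]; abel

end polytope

/-! ### Volume of the parallel sets of a convex set -/

section approx

variable {m : ℕ} {K : Set (𝔼 (m + 1))}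

/-- A bounded open convex set is approximated from inside by polytopes, up to a homothety of ratio
close to one. -/
theorem exists_polytope (hKo : IsOpen K) (hKb : Bornology.IsBounded K) (hKc : Convex ℝ K)
    {x₀ : 𝔼 (m + 1)} (hx₀ : x₀ ∈ K) {c : ℝ} (hc0 : 0 < c) (hc1 : c < 1) :
    ∃ (N : ℕ) (a : Fin N → 𝔼 (m + 1)) (b : Fin N → ℝ), (∀ i, ‖a i‖ = 1) ∧
      AffineMap.homothety x₀ c '' K ⊆ polytope a b ∧ polytope a b ⊆ K := by
  have hex : ∀ y : frontier K, ∃ a : 𝔼 (m + 1), ‖a‖ = 1 ∧ ∀ x ∈ K, ⟪a, x⟫ < ⟪a, (y : 𝔼 (m + 1))⟫ := by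
    rintro ⟨y, hy⟩
    rw [hKo.frontier_eq] at hy
    exact exists_normal hKo hKc ⟨x₀, hx₀⟩ hy.2
  choose f hf1 hf using hex
  let β : frontier K → ℝ := fun y => (1 - c) * ⟪f y, x₀⟫ + c * ⟪f y, (y : 𝔼 (m + 1))⟫
  have hcomp : IsCompact (frontier K) :=
    isCompact_of_isClosed_isBounded isClosed_frontier
      (hKb.closure.subset frontier_subset_closure)
  obtain ⟨t, ht⟩ := hcomp.elim_finite_subcover (fun y : frontier K => {x | β y < ⟪f y, x⟫})
    (fun y => isOpen_lt continuous_const (by fun_prop)) (fun y hy => mem_iUnion.2 ⟨⟨y, hy⟩, by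
      have := hf ⟨y, hy⟩ x₀ hx₀
      simp only [mem_ofPred_eq, β]
      nlinarith⟩)
  let e := t.equivFin
  refine ⟨t.card, fun i => f (e.symm i).1, fun i => β (e.symm i).1, fun i => hf1 _, ?_, ?_⟩
  · rintro _ ⟨x, hx, rfl⟩ i
    have := hf (e.symm i).1 x hx
    rw [AffineMap.homothety_apply, vsub_eq_sub, vadd_eq_add, inner_add_right,
      real_inner_smul_right, inner_sub_right]
    simp only [β]
    nlinarith
  · set Q := polytope (fun i => f (e.symm i).1) (fun i => β (e.symm i).1) with hQ
    have hx₀Q : x₀ ∈ Q := by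
      intro i
      have := hf (e.symm i).1 x₀ hx₀
      simp only [β]
      nlinarith
    intro x hx
    by_contra hxK
    obtain ⟨z, hzQ, hz⟩ := inter_frontier_nonempty_of_preconnected
      (convex_polytope.isPreconnected : IsPreconnected Q) ⟨x₀, hx₀Q, hx₀⟩ ⟨x, hx, hxK⟩
    obtain ⟨y, hyt, hy⟩ := mem_iUnion₂.1 (ht hz)
    have := hzQ (e ⟨y, hyt⟩)
    simp only [Equiv.symm_apply_apply] at this
    exact lt_asymm this hy

theorem polytope_limit {F : ℝ → ℝ≥0∞} {v : ℝ≥0∞} (hF : Tendsto F (nhdsWithin 1 (Iio 1)) (nhds (F 1)))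
    (h : ∀ c, 0 < c → c < 1 → F c ≤ v) : F 1 ≤ v := by
  refine le_of_tendsto hF ?_
  filter_upwards [Ioo_mem_nhdsLT (show (0 : ℝ) < 1 by norm_num)] with c hc
  exact h c hc.1 hc.2

theorem tendsto_pow_mul (k : ℕ) (v : ℝ≥0∞) : Tendsto (fun c : ℝ => ENNReal.ofReal (c ^ k) * v)
    (nhdsWithin 1 (Iio 1)) (nhds (ENNReal.ofReal (1 ^ k) * v)) := by
  apply ENNReal.Tendsto.mul_const
  · refine ENNReal.tendsto_ofReal (Tendsto.mono_left ?_ nhdsWithin_le_nhds)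
    exact (continuous_pow k).tendsto 1
  · left; simp

theorem homothety_volume {c : ℝ} (hc : 0 < c) (x₀ : 𝔼 (m + 1)) :
    volume (AffineMap.homothety x₀ c '' K) = ENNReal.ofReal (c ^ (m + 1)) * volume K := by
  rw [Measure.addHaar_image_homothety, finrank_euclideanSpace_fin, abs_of_nonneg (by positivity)]

theorem exists_homeomorph_homothety {c : ℝ} (hc : 0 < c) (x₀ : 𝔼 (m + 1)) :
    ∃ e : (𝔼 (m + 1)) ≃ₜ (𝔼 (m + 1)), ⇑e = AffineMap.homothety x₀ c :=
  ⟨(Homeomorph.subRight x₀).trans ((Homeomorph.smulOfNeZero c hc.ne').trans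
      (Homeomorph.addRight x₀)), funext fun _ => rfl⟩

theorem homothety_frontier {c : ℝ} (hc : 0 < c) (x₀ : 𝔼 (m + 1)) :
    μHE[m] (frontier (AffineMap.homothety x₀ c '' K)) =
      ENNReal.ofReal (c ^ m) * μHE[m] (frontier K) := by
  have h1 : frontier (AffineMap.homothety x₀ c '' K) = AffineMap.homothety x₀ c '' frontier K := by
    obtain ⟨e, he⟩ := exists_homeomorph_homothety hc x₀
    rw [← he, e.image_frontier]
  rw [h1, euclideanHausdorffMeasure_homothety_image m x₀ hc.ne', ENNReal.smul_def, smul_eq_mul]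
  congr 1
  rw [ENNReal.ofReal_pow hc.le, ENNReal.coe_pow, ← enorm_eq_nnnorm, Real.enorm_of_nonneg hc.le]

theorem homothety_open_convex (hKo : IsOpen K) (hKc : Convex ℝ K) {c : ℝ} (hc : 0 < c)
    (x₀ : 𝔼 (m + 1)) : IsOpen (AffineMap.homothety x₀ c '' K) ∧
      Convex ℝ (AffineMap.homothety x₀ c '' K) := by
  refine ⟨?_, hKc.affine_image _⟩
  obtain ⟨e, he⟩ := exists_homeomorph_homothety hc x₀
  exact he ▸ e.isOpenMap K hKo

/-- Passing to an inner parallel set at depth `h` loses at most `h` times the perimeter. -/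
theorem volume_le_innerParallel_add (hKo : IsOpen K) (hKb : Bornology.IsBounded K)
    (hKc : Convex ℝ K) (hKne : K.Nonempty) (h : ℝ) :
    volume K ≤ volume (innerParallel K h) + ENNReal.ofReal h * μHE[m] (frontier K) := by
  obtain ⟨x₀, hx₀⟩ := hKne
  have := polytope_limit (tendsto_pow_mul (m + 1) (volume K))
    (v := volume (innerParallel K h) + ENNReal.ofReal h * μHE[m] (frontier K)) ?_
  · simpa using this
  intro c hc0 hc1
  obtain ⟨N, a, b, ha, hsub1, hsub2⟩ := exists_polytope hKo hKb hKc hx₀ hc0 hc1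
  rw [← homothety_volume hc0 x₀]
  refine (measure_mono hsub1).trans ((polytope_inner ha (hKb.subset hsub2) h).trans ?_)
  have hne : (polytope a b).Nonempty := ⟨_, hsub1 (mem_image_of_mem _ hx₀)⟩
  exact add_le_add (measure_mono (innerParallel_mono hKo hKb hsub2 h)) (mul_le_mul' le_rfl
    (hausdorff_frontier_mono isOpen_polytope convex_polytope hne hKb hsub2))

/-- The `h`-neighbourhood of a convex set gains at least `h` times the perimeter. -/
theorem volume_add_le_thickening (hKo : IsOpen K) (hKb : Bornology.IsBounded K)
    (hKc : Convex ℝ K) (hKne : K.Nonempty) {h : ℝ} (hh : 0 < h) :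
    volume K + ENNReal.ofReal h * μHE[m] (frontier K) ≤ volume (thickening h K) := by
  obtain ⟨x₀, hx₀⟩ := hKne
  have := polytope_limit ((tendsto_pow_mul (m + 1) (volume K)).add
    (tendsto_pow_mul m (ENNReal.ofReal h * μHE[m] (frontier K)))) (v := volume (thickening h K)) ?_
  · simpa using this
  intro c hc0 hc1
  obtain ⟨N, a, b, ha, hsub1, hsub2⟩ := exists_polytope hKo hKb hKc hx₀ hc0 hc1
  obtain ⟨ho, hcv⟩ := homothety_open_convex hKo hKc hc0 x₀
  rw [← homothety_volume hc0 x₀, mul_left_comm, ← homothety_frontier hc0 x₀]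
  refine le_trans ?_ ((polytope_outer ha hh).trans (measure_mono (thickening_subset_of_subset h hsub2)))
  exact add_le_add (measure_mono hsub1) (mul_le_mul' le_rfl
    (hausdorff_frontier_mono ho hcv ⟨_, mem_image_of_mem _ hx₀⟩ (hKb.subset hsub2) hsub1))

end approx

/-! ### The Prékopa–Leindler and Brunn–Minkowski inequalities -/

section prekopaLeindler

variable {a b : ℝ}

open scoped Pointwise in
/-- One-dimensional Brunn–Minkowski for compact sets. -/
theorem volume_combo_le_of_isCompact (ha : 0 < a) (hb : 0 < b) {A B C : Set ℝ} (hA : IsCompact A)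
    (hB : IsCompact B) (hA0 : A.Nonempty) (hB0 : B.Nonempty)
    (h : ∀ x ∈ A, ∀ y ∈ B, a * x + b * y ∈ C) :
    ENNReal.ofReal a * volume A + ENNReal.ofReal b * volume B ≤ volume C := by
  obtain ⟨p, hpA, hp⟩ := hA.exists_isLeast hA0
  obtain ⟨q, hqB, hq⟩ := hB.exists_isGreatest hB0
  -- the two translates meet only at the point `a * p + b * q`
  let S : Set ℝ := (fun x => a * x + b * q) '' A
  let T : Set ℝ := (fun y => a * p + b * y) '' B
  have hS : volume S = ENNReal.ofReal a * volume A := by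
    have : S = (fun z => b * q + z) '' (a • A) := by
      rw [← image_smul, image_image]
      exact image_congr fun x _ => by rw [smul_eq_mul, add_comm]
    rw [this, image_add_left, measure_preimage_add, Measure.addHaar_smul]
    simp [abs_of_pos ha]
  have hT : volume T = ENNReal.ofReal b * volume B := by
    have : T = (fun z => a * p + z) '' (b • B) := by
      rw [← image_smul, image_image]
      exact image_congr fun x _ => by rw [smul_eq_mul]
    rw [this, image_add_left, measure_preimage_add, Measure.addHaar_smul]
    simp [abs_of_pos hb]
  have hTm : MeasurableSet T := (hB.image (by fun_prop)).measurableSet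
  have hST : volume (S ∩ T) = 0 := by
    refine measure_mono_null (t := {a * p + b * q}) ?_ (by simp)
    rintro z ⟨⟨x, hx, rfl⟩, ⟨y, hy, e⟩⟩
    have h1 := mul_le_mul_of_nonneg_left (hp hx) ha.le
    have h2 := mul_le_mul_of_nonneg_left (hq hy) hb.le
    simp only at e
    rw [mem_singleton_iff]
    dsimp only
    linarith
  rw [← hS, ← hT, ← measure_union_add_inter S hTm, hST, add_zero]
  apply measure_mono
  rintro z (⟨x, hx, rfl⟩ | ⟨y, hy, rfl⟩)
  · exact h x hx q hqB
  · exact h p hpA y hy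

/-- One-dimensional Brunn–Minkowski. -/
theorem volume_combo_le (ha : 0 < a) (hb : 0 < b) {A B C : Set ℝ} (hA : MeasurableSet A)
    (hB : MeasurableSet B) (hA0 : A.Nonempty) (hB0 : B.Nonempty)
    (h : ∀ x ∈ A, ∀ y ∈ B, a * x + b * y ∈ C) :
    ENNReal.ofReal a * volume A + ENNReal.ofReal b * volume B ≤ volume C := by
  rw [hA.measure_eq_iSup_isCompact, hB.measure_eq_iSup_isCompact]
  simp only [ENNReal.mul_iSup, iSup_and']
  refine ENNReal.biSup_add_biSup_le' ⟨∅, by simp⟩ ⟨∅, by simp⟩ fun K hK L hL => ?_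
  obtain ⟨x, hx⟩ := hA0
  obtain ⟨y, hy⟩ := hB0
  refine le_trans ?_ (volume_combo_le_of_isCompact ha hb (hK.2.insert x) (hL.2.insert y)
    (insert_nonempty _ _) (insert_nonempty _ _)
    fun x' hx' y' hy' => h x' (insert_subset hx hK.1 hx') y' (insert_subset hy hL.1 hy'))
  gcongr <;> exact subset_insert _ _

/-- An additive form of the one-dimensional Prékopa–Leindler inequality, valid for functions of
supremum one. Brunn–Minkowski for the level sets is integrated over the height; the normalisation
makes the level sets of `f` and `g` nonempty at the same heights. -/
theorem lintegral_combo_le (ha : 0 < a) (hb : 0 < b) {f g k : ℝ → ℝ} (hf : Measurable f)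
    (hg : Measurable g) (hk : Measurable k) (hf0 : ∀ x, 0 ≤ f x) (hg0 : ∀ x, 0 ≤ g x)
    (hk0 : ∀ x, 0 ≤ k x) (hf1 : ∀ x, f x ≤ 1) (hg1 : ∀ x, g x ≤ 1)
    (hfs : ∀ t < 1, ∃ x, t < f x) (hgs : ∀ t < 1, ∃ x, t < g x)
    (h : ∀ t, 0 < t → t < 1 → ∀ x y, t < f x → t < g y → t < k (a * x + b * y)) :
    ENNReal.ofReal a * (∫⁻ x, ENNReal.ofReal (f x)) +
      ENNReal.ofReal b * (∫⁻ x, ENNReal.ofReal (g x)) ≤ ∫⁻ x, ENNReal.ofReal (k x) := by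
  rw [lintegral_eq_lintegral_meas_lt volume (ae_of_all _ hf0) hf.aemeasurable,
    lintegral_eq_lintegral_meas_lt volume (ae_of_all _ hg0) hg.aemeasurable,
    lintegral_eq_lintegral_meas_lt volume (ae_of_all _ hk0) hk.aemeasurable]
  have hanti : ∀ φ : ℝ → ℝ, Measurable fun t : ℝ => volume {x | t < φ x} := fun φ =>
    Antitone.measurable fun s t hst => measure_mono fun x (hx : t < φ x) => hst.trans_lt hx
  rw [← lintegral_const_mul _ (hanti f), ← lintegral_const_mul _ (hanti g),
    ← lintegral_add_left ((hanti f).const_mul _)]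
  refine setLIntegral_mono (hanti k) fun t ht => ?_
  rcases lt_or_ge t 1 with ht1 | ht1
  · exact volume_combo_le ha hb (measurableSet_lt measurable_const hf)
      (measurableSet_lt measurable_const hg) (hfs t ht1) (hgs t ht1)
      fun x hx y hy => h t ht ht1 x y hx hy
  · -- above height `1` the level sets of `f` and `g` are empty
    have h1 : {x | t < f x} = ∅ := eq_empty_of_forall_notMem fun x hx =>
      absurd (hx.trans_le (hf1 x)) ht1.not_gt
    have h2 : {x | t < g x} = ∅ := eq_empty_of_forall_notMem fun x hx =>
      absurd (hx.trans_le (hg1 x)) ht1.not_gt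
    rw [h1, h2]
    simp

theorem geom_le_arith (ha : 0 < a) (hb : 0 < b) (hab : a + b = 1) (p q : ℝ≥0∞) :
    p ^ a * q ^ b ≤ ENNReal.ofReal a * p + ENNReal.ofReal b * q := by
  have ha' : ENNReal.ofReal a ≠ 0 := by simpa using ha
  have hb' : ENNReal.ofReal b ≠ 0 := by simpa using hb
  rcases eq_or_ne p ∞ with rfl | hp
  · rw [ENNReal.mul_top ha', top_add]; exact le_top
  rcases eq_or_ne q ∞ with rfl | hq
  · rw [ENNReal.mul_top hb', add_top]; exact le_top
  lift p to NNReal using hp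
  lift q to NNReal using hq
  have := NNReal.geom_mean_le_arith_mean2_weighted a.toNNReal b.toNNReal p q
    (by rw [← Real.toNNReal_add ha.le hb.le, hab, Real.toNNReal_one])
  rw [Real.coe_toNNReal _ ha.le, Real.coe_toNNReal _ hb.le] at this
  rw [← ENNReal.coe_rpow_of_nonneg _ ha.le, ← ENNReal.coe_rpow_of_nonneg _ hb.le]
  unfold ENNReal.ofReal
  exact_mod_cast this

/-- The one-dimensional Prékopa–Leindler inequality for bounded functions, by rescaling to
supremum one. -/
theorem prekopa_leindler_bounded (ha : 0 < a) (hb : 0 < b) (hab : a + b = 1) {u v w : ℝ → ℝ≥0∞}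
    (hu : Measurable u) (hv : Measurable v) (hw : Measurable w) (hub : (⨆ x, u x) ≠ ∞)
    (hvb : (⨆ x, v x) ≠ ∞) (h : ∀ x y, u x ^ a * v y ^ b ≤ w (a * x + b * y)) :
    (∫⁻ x, u x) ^ a * (∫⁻ x, v x) ^ b ≤ ∫⁻ x, w x := by
  have huM : ∀ x, u x ≤ ⨆ x, u x := le_iSup u
  have hvN : ∀ x, v x ≤ ⨆ x, v x := le_iSup v
  have hltM : ∀ s < ⨆ x, u x, ∃ x, s < u x := fun s hs => lt_iSup_iff.1 hs
  have hltN : ∀ s < ⨆ x, v x, ∃ x, s < v x := fun s hs => lt_iSup_iff.1 hs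
  generalize (⨆ x, u x) = M at *
  generalize (⨆ x, v x) = N at *
  rcases eq_or_ne M 0 with rfl | hM
  · have : u = fun _ => 0 := funext fun x => le_antisymm (huM x) zero_le
    rw [this, lintegral_zero, ENNReal.zero_rpow_of_pos ha, zero_mul]
    exact zero_le
  rcases eq_or_ne N 0 with rfl | hN
  · have : v = fun _ => 0 := funext fun x => le_antisymm (hvN x) zero_le
    rw [this, lintegral_zero, ENNReal.zero_rpow_of_pos hb, mul_zero]
    exact zero_le
  have hMa0 : M ^ a ≠ 0 := (ENNReal.rpow_pos (pos_iff_ne_zero.2 hM) hub).ne'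
  have hNb0 : N ^ b ≠ 0 := (ENNReal.rpow_pos (pos_iff_ne_zero.2 hN) hvb).ne'
  have hMat : M ^ a ≠ ∞ := ENNReal.rpow_ne_top_of_nonneg ha.le hub
  have hNbt : N ^ b ≠ ∞ := ENNReal.rpow_ne_top_of_nonneg hb.le hvb
  obtain ⟨D, hD⟩ : ∃ D, D = M ^ a * N ^ b := ⟨_, rfl⟩
  have hD0 : D ≠ 0 := hD ▸ mul_ne_zero hMa0 hNb0
  have hDt : D ≠ ∞ := hD ▸ ENNReal.mul_ne_top hMat hNbt
  have hu1 : ∀ x, u x / M ≤ 1 := fun x => ENNReal.div_le_of_le_mul (by rw [one_mul]; exact huM x)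
  have hv1 : ∀ x, v x / N ≤ 1 := fun x => ENNReal.div_le_of_le_mul (by rw [one_mul]; exact hvN x)
  have hut : ∀ x, u x / M ≠ ∞ := fun x => ((hu1 x).trans_lt ENNReal.one_lt_top).ne
  have hvt : ∀ x, v x / N ≠ ∞ := fun x => ((hv1 x).trans_lt ENNReal.one_lt_top).ne
  have hwt : ∀ x, min (w x / D) 1 ≠ ∞ := fun x => ((min_le_right _ _).trans_lt ENNReal.one_lt_top).ne
  have hsup : ∀ {f : ℝ → ℝ≥0∞} {L : ℝ≥0∞}, L ≠ 0 → L ≠ ∞ → (∀ x, f x / L ≠ ∞) →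
      (∀ s < L, ∃ x, s < f x) → ∀ t < (1 : ℝ), ∃ x, t < (f x / L).toReal := by
    intro f L hL hLt hft hlt t ht
    obtain ⟨x, hx⟩ := hlt (ENNReal.ofReal t * L) (by
      conv_rhs => rw [← one_mul L]
      exact ENNReal.mul_lt_mul_left hL hLt (by simpa using ht))
    rcases lt_or_ge t 0 with ht0 | ht0
    · exact ⟨x, ht0.trans_le ENNReal.toReal_nonneg⟩
    refine ⟨x, (ENNReal.ofReal_lt_iff_lt_toReal ht0 (hft x)).1 ?_⟩
    exact (ENNReal.lt_div_iff_mul_lt (Or.inl hL) (Or.inl hLt)).2 hx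
  have key := lintegral_combo_le ha hb (f := fun x => (u x / M).toReal)
    (g := fun x => (v x / N).toReal) (k := fun x => (min (w x / D) 1).toReal)
    (hu.div_const M).ennreal_toReal (hv.div_const N).ennreal_toReal
    ((hw.div_const D).min measurable_const).ennreal_toReal
    (fun _ => ENNReal.toReal_nonneg) (fun _ => ENNReal.toReal_nonneg)
    (fun _ => ENNReal.toReal_nonneg)
    (fun x => ENNReal.toReal_le_of_le_ofReal zero_le_one (by simpa using hu1 x))
    (fun x => ENNReal.toReal_le_of_le_ofReal zero_le_one (by simpa using hv1 x))
    (hsup hM hub hut hltM) (hsup hN hvb hvt hltN) (by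
      intro t ht0 ht1 x y hx hy
      rw [← ENNReal.ofReal_lt_iff_lt_toReal ht0.le (hut x)] at hx
      rw [← ENNReal.ofReal_lt_iff_lt_toReal ht0.le (hvt y)] at hy
      rw [← ENNReal.ofReal_lt_iff_lt_toReal ht0.le (hwt _), lt_min_iff]
      refine ⟨?_, by simpa using ht1⟩
      have ht : ENNReal.ofReal t ≠ 0 := by simpa using ht0
      calc ENNReal.ofReal t = ENNReal.ofReal t ^ a * ENNReal.ofReal t ^ b := by
            rw [← ENNReal.rpow_add _ _ ht ENNReal.ofReal_ne_top, hab, ENNReal.rpow_one]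
        _ < (u x / M) ^ a * (v y / N) ^ b :=
            ENNReal.mul_lt_mul (ENNReal.rpow_lt_rpow hx ha) (ENNReal.rpow_lt_rpow hy hb)
        _ = u x ^ a * v y ^ b / D := by
            rw [ENNReal.div_rpow_of_nonneg _ _ ha.le, ENNReal.div_rpow_of_nonneg _ _ hb.le, hD,
              div_eq_mul_inv, div_eq_mul_inv, div_eq_mul_inv,
              ENNReal.mul_inv (Or.inl hMa0) (Or.inl hMat)]
            ring
        _ ≤ w (a * x + b * y) / D := ENNReal.div_le_div_right (h x y) _)
  simp only [ENNReal.ofReal_toReal (hut _), ENNReal.ofReal_toReal (hvt _),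
    ENNReal.ofReal_toReal (hwt _)] at key
  have hdiv : ∀ {f : ℝ → ℝ≥0∞} {L : ℝ≥0∞}, Measurable f → L ≠ 0 → L ≠ ∞ →
      ∫⁻ x, f x = L * ∫⁻ x, f x / L := by
    intro f L hf hL hLt
    rw [← lintegral_const_mul _ (hf.div_const L)]
    exact lintegral_congr fun x => (ENNReal.mul_div_cancel hL hLt).symm
  calc (∫⁻ x, u x) ^ a * (∫⁻ x, v x) ^ b
      = D * ((∫⁻ x, u x / M) ^ a * (∫⁻ x, v x / N) ^ b) := by
        rw [hdiv hu hM hub, hdiv hv hN hvb, ENNReal.mul_rpow_of_nonneg _ _ ha.le,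
          ENNReal.mul_rpow_of_nonneg _ _ hb.le, hD]
        ring
    _ ≤ D * ∫⁻ x, w x / D := by
        gcongr
        exact (geom_le_arith ha hb hab _ _).trans
          (key.trans (lintegral_mono fun x => min_le_left _ _))
    _ = ∫⁻ x, w x := (hdiv hw hD0 hDt).symm

/-- The one-dimensional Prékopa–Leindler inequality. -/
theorem prekopa_leindler_one (ha : 0 < a) (hb : 0 < b) (hab : a + b = 1) {u v w : ℝ → ℝ≥0∞}
    (hu : Measurable u) (hv : Measurable v) (hw : Measurable w)
    (h : ∀ x y, u x ^ a * v y ^ b ≤ w (a * x + b * y)) :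
    (∫⁻ x, u x) ^ a * (∫⁻ x, v x) ^ b ≤ ∫⁻ x, w x := by
  rcases eq_or_ne (∫⁻ x, u x) 0 with h0 | hu0
  · rw [h0, ENNReal.zero_rpow_of_pos ha, zero_mul]; exact zero_le
  rcases eq_or_ne (∫⁻ x, v x) 0 with h0 | hv0
  · rw [h0, ENNReal.zero_rpow_of_pos hb, mul_zero]; exact zero_le
  -- truncate `u` and `v` at height `k` and pass to the limit
  have hlim : ∀ {f : ℝ → ℝ≥0∞}, Measurable f →
      Tendsto (fun k : ℕ => ∫⁻ x, min (f x) k) atTop (nhds (∫⁻ x, f x)) := by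
    intro f hf
    refine lintegral_tendsto_of_tendsto_of_monotone (fun k => (hf.min measurable_const).aemeasurable)
      (ae_of_all _ fun x i j hij => min_le_min le_rfl (by exact_mod_cast hij)) (ae_of_all _ fun x => ?_)
    have := (tendsto_const_nhds (x := f x)).min ENNReal.tendsto_nat_nhds_top
    rwa [min_eq_left le_top] at this
  have hpow : ∀ {x : ℝ≥0∞} {c : ℝ}, 0 < c → x ≠ 0 → x ^ c ≠ 0 := fun hc hx => by
    rw [Ne, ENNReal.rpow_eq_zero_iff]
    rintro (⟨h, -⟩ | ⟨-, h⟩)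
    · exact hx h
    · linarith
  have h1 := ENNReal.Tendsto.mul (((ENNReal.continuous_rpow_const (y := a)).tendsto _).comp (hlim hu))
    (Or.inl (hpow ha hu0)) (((ENNReal.continuous_rpow_const (y := b)).tendsto _).comp (hlim hv))
    (Or.inl (hpow hb hv0))
  refine le_of_tendsto' h1 fun k => prekopa_leindler_bounded ha hb hab (hu.min measurable_const)
    (hv.min measurable_const) hw ?_ ?_ fun x y => le_trans ?_ (h x y)
  · exact ((iSup_le fun x => min_le_right _ _).trans_lt (ENNReal.natCast_lt_top k)).ne
  · exact ((iSup_le fun x => min_le_right _ _).trans_lt (ENNReal.natCast_lt_top k)).ne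
  · exact mul_le_mul' (ENNReal.rpow_le_rpow (min_le_left _ _) ha.le)
      (ENNReal.rpow_le_rpow (min_le_left _ _) hb.le)

/-- The Prékopa–Leindler inequality. -/
theorem prekopa_leindler (ha : 0 < a) (hb : 0 < b) (hab : a + b = 1) (n : ℕ) :
    ∀ {u v w : (Fin n → ℝ) → ℝ≥0∞}, Measurable u → Measurable v → Measurable w →
    (∀ x y, u x ^ a * v y ^ b ≤ w (a • x + b • y)) →
    (∫⁻ x, u x) ^ a * (∫⁻ x, v x) ^ b ≤ ∫⁻ x, w x := by
  induction n with
  | zero =>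
    intro u v w hu hv hw h
    rw [lintegral_unique, lintegral_unique, lintegral_unique]
    have key : ∀ p q r : Fin 0 → ℝ, u p ^ a * v q ^ b ≤ w r := fun p q r => by
      have := h p q
      rwa [Subsingleton.elim (a • p + b • q) r] at this
    have h1 : volume (univ : Set (Fin 0 → ℝ)) = 1 := by simp [volume_pi]
    rw [h1, mul_one, mul_one, mul_one]
    exact key _ _ _
  | succ n ih =>
    intro u v w hu hv hw h
    let e := (MeasurableEquiv.piFinSuccAbove (fun _ : Fin (n + 1) => ℝ) 0).symm
    have he : MeasurePreserving e := (volume_preserving_piFinSuccAbove (fun _ : Fin (n + 1) => ℝ) 0).symm _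
    have hec : ∀ (s t : ℝ) (x y : Fin n → ℝ),
        e (a * s + b * t, a • x + b • y) = a • e (s, x) + b • e (t, y) := by
      intro s t x y
      funext i
      refine Fin.cases ?_ (fun j => ?_) i <;> simp [e, Fin.insertNthEquiv]
    have hint : ∀ {f : (Fin (n + 1) → ℝ) → ℝ≥0∞}, Measurable f →
        ∫⁻ x, f x = ∫⁻ s, ∫⁻ y, f (e (s, y)) := by
      intro f hf
      rw [← he.lintegral_comp hf]
      exact lintegral_prod _ (hf.comp e.measurable).aemeasurable
    have hm : ∀ {f : (Fin (n + 1) → ℝ) → ℝ≥0∞}, Measurable f →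
        Measurable fun s => ∫⁻ y, f (e (s, y)) :=
      fun hf => (hf.comp e.measurable).lintegral_prod_right'
    have hsec : ∀ {f : (Fin (n + 1) → ℝ) → ℝ≥0∞}, Measurable f → ∀ s : ℝ,
        Measurable fun y => f (e (s, y)) :=
      fun hf s => hf.comp (e.measurable.comp measurable_prodMk_left)
    rw [hint hu, hint hv, hint hw]
    refine prekopa_leindler_one ha hb hab (hm hu) (hm hv) (hm hw) fun s t => ?_
    refine ih (hsec hu s) (hsec hv t) (hsec hw _) fun x y => ?_
    rw [hec]
    exact h _ _

/-- The multiplicative Brunn–Minkowski inequality. -/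
theorem brunn_minkowski (ha : 0 < a) (hb : 0 < b) (hab : a + b = 1) {n : ℕ}
    {A B C : Set (EuclideanSpace ℝ (Fin n))} (hA : MeasurableSet A) (hB : MeasurableSet B)
    (hC : MeasurableSet C) (h : ∀ x ∈ A, ∀ y ∈ B, a • x + b • y ∈ C) :
    volume A ^ a * volume B ^ b ≤ volume C := by
  have hm : Measurable (WithLp.toLp 2 : (Fin n → ℝ) → EuclideanSpace ℝ (Fin n)) :=
    (PiLp.volume_preserving_toLp (Fin n)).measurable
  have key : ∀ {D : Set (EuclideanSpace ℝ (Fin n))}, MeasurableSet D → volume D =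
      ∫⁻ x : Fin n → ℝ, (WithLp.toLp 2 ⁻¹' D).indicator (fun _ => (1 : ℝ≥0∞)) x := by
    intro D hD
    rw [lintegral_indicator_const (hm hD), one_mul,
      (PiLp.volume_preserving_toLp (Fin n)).measure_preimage hD.nullMeasurableSet]
  rw [key hA, key hB, key hC]
  refine prekopa_leindler ha hb hab n (measurable_const.indicator (hm hA))
    (measurable_const.indicator (hm hB)) (measurable_const.indicator (hm hC)) fun x y => ?_
  by_cases hx : WithLp.toLp 2 x ∈ A
  · by_cases hy : WithLp.toLp 2 y ∈ B
    · have := h _ hx _ hy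
      rw [indicator_of_mem (by exact hx), indicator_of_mem (by exact hy), indicator_of_mem (by exact this)]
      simp
    · rw [indicator_of_notMem (s := WithLp.toLp 2 ⁻¹' B) (by exact hy), ENNReal.zero_rpow_of_pos hb,
        mul_zero]
      exact zero_le
  · rw [indicator_of_notMem (s := WithLp.toLp 2 ⁻¹' A) (by exact hx), ENNReal.zero_rpow_of_pos ha,
      zero_mul]
    exact zero_le

end prekopaLeindler

/-! ### Perimeter and volume of inner parallel sets -/

section innerParallel

variable {m : ℕ} {K : Set (𝔼 (m + 1))} {r s h : ℝ}

/-- Logarithmic concavity of the volume of the inner parallel sets, without logarithms. -/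
theorem volume_mul_volume_le (hKo : IsOpen K) (hKb : Bornology.IsBounded K) (hKc : Convex ℝ K)
    (hrs : r < s) (hh : 0 < h) :
    volume (innerParallel K r) * volume (innerParallel K (s + h)) ≤
      volume (innerParallel K (r + h)) * volume (innerParallel K s) := by
  -- `r + h` and `s` are complementary convex combinations of `r` and `s + h`
  obtain ⟨b, hb⟩ : ∃ b, b = h / (s - r + h) := ⟨_, rfl⟩
  obtain ⟨a, ha⟩ : ∃ a, a = (s - r) / (s - r + h) := ⟨_, rfl⟩
  have hd : 0 < s - r + h := by linarith
  have hb0 : 0 < b := hb ▸ div_pos hh hd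
  have ha0 : 0 < a := ha ▸ div_pos (by linarith) hd
  have hab : a + b = 1 := by rw [ha, hb, ← add_div, div_self hd.ne']
  have e1 : a * r + b * (s + h) = r + h := by rw [ha, hb]; field_simp; ring
  have e2 : b * r + a * (s + h) = s := by rw [ha, hb]; field_simp; ring
  have hm : ∀ t, MeasurableSet (innerParallel K t) := fun t =>
    (isOpen_innerParallel hKo t).measurableSet
  have h1 := brunn_minkowski ha0 hb0 hab (hm r) (hm (s + h)) (hm (r + h)) fun x hx y hy =>
    e1 ▸ combo_mem_innerParallel hKo hKb hKc ha0.le hb0.le hab hx hy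
  have h2 := brunn_minkowski hb0 ha0 ((add_comm b a).trans hab) (hm r) (hm (s + h)) (hm s)
    fun x hx y hy =>
      e2 ▸ combo_mem_innerParallel hKo hKb hKc hb0.le ha0.le ((add_comm b a).trans hab) hx hy
  refine le_trans (le_of_eq ?_) (mul_le_mul' h1 h2)
  have hp : ∀ p : ℝ≥0∞, p ^ a * p ^ b = p := fun p => by
    rw [← ENNReal.rpow_add_of_nonneg _ _ ha0.le hb0.le, hab, ENNReal.rpow_one]
  rw [mul_mul_mul_comm, mul_comm (_ ^ b) (_ ^ a), hp, hp]

theorem bddAbove_infDist (hKb : Bornology.IsBounded K) :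
    BddAbove ((fun x => infDist x (frontier K)) '' K) := by
  rcases K.eq_empty_or_nonempty with rfl | hKne
  · simp
  obtain ⟨z, hz⟩ := frontier_nonempty_of_bounded hKb hKne
  obtain ⟨C, hC⟩ := (isBounded_iff.1 hKb.closure)
  refine ⟨C, ?_⟩
  rintro _ ⟨x, hx, rfl⟩
  exact (infDist_le_dist_of_mem hz).trans (hC (subset_closure hx) (frontier_subset_closure hz))

theorem innerParallel_nonempty (hKne : K.Nonempty) (hr : r < inradius K) :
    (innerParallel K r).Nonempty := by
  obtain ⟨_, ⟨x, hx, rfl⟩, hxr⟩ := exists_lt_of_lt_csSup (hKne.image _) hr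
  exact ⟨x, hx, hxr⟩

theorem innerParallel_inradius (hKb : Bornology.IsBounded K) :
    innerParallel K (inradius K) = ∅ :=
  eq_empty_of_forall_notMem fun _ hx =>
    absurd hx.2 (le_csSup (bddAbove_infDist hKb) (mem_image_of_mem _ hx.1)).not_gt

theorem inradius_pos (hKo : IsOpen K) (hKb : Bornology.IsBounded K) (hKne : K.Nonempty) :
    0 < inradius K := by
  obtain ⟨x, hx⟩ := hKne
  obtain ⟨ε, hε, hb⟩ := isOpen_iff.1 hKo x hx
  exact hε.trans_le ((le_infDist_frontier hKo hKb ⟨x, hx⟩ hb).trans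
    (le_csSup (bddAbove_infDist hKb) (mem_image_of_mem _ hx)))

theorem hausdorff_frontier_ne_top (hKo : IsOpen K) (hKb : Bornology.IsBounded K)
    (hKc : Convex ℝ K) : μHE[m] (frontier K) ≠ ∞ := by
  rcases K.eq_empty_or_nonempty with rfl | hKne
  · simp
  have h1 := volume_add_le_thickening hKo hKb hKc hKne one_pos
  rw [ENNReal.ofReal_one, one_mul] at h1
  exact ((le_add_self.trans h1).trans_lt hKb.thickening.measure_lt_top).ne

/-- The volume of the inner parallel set, as a real number. -/
def volInner (K : Set (𝔼 (m + 1))) (r : ℝ) : ℝ := (volume (innerParallel K r)).toReal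

/-- The perimeter of the inner parallel set, as a real number, with the normalisation of the
Hausdorff measure for which it agrees with Lebesgue measure on hyperplanes. -/
def perInner (K : Set (𝔼 (m + 1))) (r : ℝ) : ℝ := (μHE[m] (frontier (innerParallel K r))).toReal

theorem volume_innerParallel_ne_top (hKb : Bornology.IsBounded K) :
    volume (innerParallel K r) ≠ ∞ := (hKb.subset (innerParallel_subset r)).measure_lt_top.ne

theorem hausdorff_frontier_innerParallel_ne_top (hKo : IsOpen K) (hKb : Bornology.IsBounded K)
    (hKc : Convex ℝ K) : μHE[m] (frontier (innerParallel K r)) ≠ ∞ :=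
  hausdorff_frontier_ne_top (isOpen_innerParallel hKo r) (hKb.subset (innerParallel_subset r))
    (convex_innerParallel hKo hKb hKc r)

theorem volInner_pos (hKo : IsOpen K) (hKb : Bornology.IsBounded K) (hKne : K.Nonempty)
    (hr : r < inradius K) : 0 < volInner K r :=
  ENNReal.toReal_pos ((isOpen_innerParallel hKo r).measure_pos _
    (innerParallel_nonempty hKne hr)).ne' (volume_innerParallel_ne_top hKb)

theorem volInner_le (hKo : IsOpen K) (hKb : Bornology.IsBounded K) (hKc : Convex ℝ K)
    (hKne : K.Nonempty) (hr0 : 0 ≤ r) (hr : r < inradius K) (hh : 0 ≤ h) :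
    volInner K r ≤ volInner K (r + h) + h * perInner K r := by
  have h1 := (volume_le_innerParallel_add (isOpen_innerParallel hKo r)
    (hKb.subset (innerParallel_subset r)) (convex_innerParallel hKo hKb hKc r)
    (innerParallel_nonempty hKne hr) h).trans
    (add_le_add_left (measure_mono (innerParallel_innerParallel_subset hKo hKb hr0)) _)
  have hP := hausdorff_frontier_innerParallel_ne_top (r := r) hKo hKb hKc
  have h2 := ENNReal.toReal_mono (ENNReal.add_ne_top.2 ⟨volume_innerParallel_ne_top hKb,
    ENNReal.mul_ne_top ENNReal.ofReal_ne_top hP⟩) h1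
  rwa [ENNReal.toReal_add (volume_innerParallel_ne_top hKb)
    (ENNReal.mul_ne_top ENNReal.ofReal_ne_top hP), ENNReal.toReal_mul,
    ENNReal.toReal_ofReal hh] at h2

theorem volInner_add_le (hKo : IsOpen K) (hKb : Bornology.IsBounded K) (hKc : Convex ℝ K)
    (hKne : K.Nonempty) (hr0 : 0 ≤ r) (hr : r + h < inradius K) (hh : 0 < h) :
    volInner K (r + h) + h * perInner K (r + h) ≤ volInner K r := by
  have h1 := (volume_add_le_thickening (isOpen_innerParallel hKo (r + h))
    (hKb.subset (innerParallel_subset _)) (convex_innerParallel hKo hKb hKc _)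
    (innerParallel_nonempty hKne hr) hh).trans
    (measure_mono (thickening_innerParallel_subset hr0))
  have hP := hausdorff_frontier_innerParallel_ne_top (r := r + h) hKo hKb hKc
  have h2 := ENNReal.toReal_mono (volume_innerParallel_ne_top hKb) h1
  rwa [ENNReal.toReal_add (volume_innerParallel_ne_top hKb)
    (ENNReal.mul_ne_top ENNReal.ofReal_ne_top hP), ENNReal.toReal_mul,
    ENNReal.toReal_ofReal hh.le] at h2

/-- A semicontinuity estimate for the perimeter: the inner parallel set at depth
`r + θ * (s - r)` contains a copy of the one at depth `r` shrunk by the factor `1 - θ`. -/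
theorem pow_mul_perInner_le (hKo : IsOpen K) (hKb : Bornology.IsBounded K) (hKc : Convex ℝ K)
    (hKne : K.Nonempty) (hrs : r < s) (hs : s < inradius K) {θ : ℝ} (hθ0 : 0 < θ) (hθ1 : θ < 1) :
    (1 - θ) ^ m * perInner K r ≤ perInner K (r + θ * (s - r)) := by
  obtain ⟨x₀, hx₀⟩ := innerParallel_nonempty hKne hs
  have hc : 0 < 1 - θ := by linarith
  have hsub : AffineMap.homothety x₀ (1 - θ) '' innerParallel K r ⊆
      innerParallel K (r + θ * (s - r)) := by
    rintro _ ⟨x, hx, rfl⟩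
    have := combo_mem_innerParallel hKo hKb hKc hc.le hθ0.le (sub_add_cancel 1 θ) hx hx₀
    rw [show r + θ * (s - r) = (1 - θ) * r + θ * s by ring]
    convert this using 1
    rw [AffineMap.homothety_apply, vsub_eq_sub, vadd_eq_add]
    module
  obtain ⟨ho, hcv⟩ := homothety_open_convex (isOpen_innerParallel hKo r)
    (convex_innerParallel hKo hKb hKc r) hc x₀
  have h1 := hausdorff_frontier_mono ho hcv ((innerParallel_nonempty hKne (hrs.trans hs)).image _)
    (hKb.subset (innerParallel_subset _)) hsub
  rw [homothety_frontier hc] at h1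
  have h2 := ENNReal.toReal_mono (hausdorff_frontier_innerParallel_ne_top hKo hKb hKc) h1
  rwa [ENNReal.toReal_mul, ENNReal.toReal_ofReal (by positivity)] at h2

/-- The ratio of perimeter to volume is nondecreasing, with the Euclidean normalisation of the
perimeter. -/
theorem perInner_div_volInner_le (hKo : IsOpen K) (hKb : Bornology.IsBounded K) (hKc : Convex ℝ K)
    (hKne : K.Nonempty) (hr0 : 0 ≤ r) (hrs : r ≤ s) (hs : s < inradius K) :
    perInner K r / volInner K r ≤ perInner K s / volInner K s := by
  rcases hrs.eq_or_lt with rfl | hrs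
  · exact le_rfl
  have hVr := volInner_pos hKo hKb hKne (hrs.trans hs)
  have hVs := volInner_pos hKo hKb hKne hs
  rw [div_le_div_iff₀ hVr hVs]
  have key : ∀ θ : ℝ, 0 < θ → θ < 1 →
      (1 - θ) ^ m * (perInner K r * volInner K s) ≤ perInner K s * volInner K r := by
    intro θ hθ0 hθ1
    have h1 := pow_mul_perInner_le hKo hKb hKc hKne hrs hs hθ0 hθ1
    obtain ⟨h, hh⟩ : ∃ h, h = θ * (s - r) := ⟨_, rfl⟩
    have hh0 : 0 < h := hh ▸ mul_pos hθ0 (sub_pos.2 hrs)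
    have hh1 : r + h < inradius K := by
      have : θ * (s - r) ≤ 1 * (s - r) := by
        gcongr
      linarith
    rw [← hh] at h1
    have h2 := volInner_add_le hKo hKb hKc hKne hr0 hh1 hh0
    have h3 := volInner_le hKo hKb hKc hKne (hr0.trans hrs.le) hs hh0.le
    have h4 : volInner K r * volInner K (s + h) ≤ volInner K (r + h) * volInner K s := by
      have := ENNReal.toReal_mono (ENNReal.mul_ne_top (volume_innerParallel_ne_top hKb)
        (volume_innerParallel_ne_top hKb)) (volume_mul_volume_le hKo hKb hKc hrs hh0)
      rwa [ENNReal.toReal_mul, ENNReal.toReal_mul] at this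
    -- the perimeter is compared with the volume lost over depth `h`, which is at least
    -- `h * perInner K (r + h)` between `r` and `r + h`, and at most `h * perInner K s` between `s` and
    -- `s + h`
    refine le_of_mul_le_mul_left ?_ hh0
    calc h * ((1 - θ) ^ m * (perInner K r * volInner K s))
        = h * ((1 - θ) ^ m * perInner K r) * volInner K s := by ring
      _ ≤ h * perInner K (r + h) * volInner K s := by gcongr
      _ ≤ (volInner K r - volInner K (r + h)) * volInner K s := by
          gcongr
          linarith
      _ ≤ volInner K r * (volInner K s - volInner K (s + h)) := by linarith
      _ ≤ volInner K r * (h * perInner K s) := by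
          gcongr
          linarith
      _ = h * (perInner K s * volInner K r) := by ring
  have hlim : Tendsto (fun θ : ℝ => (1 - θ) ^ m * (perInner K r * volInner K s))
      (nhdsWithin 0 (Ioi 0)) (nhds (perInner K r * volInner K s)) := by
    have hc : Continuous fun θ : ℝ => (1 - θ) ^ m * (perInner K r * volInner K s) := by fun_prop
    have := hc.tendsto 0
    simp only [sub_zero, one_pow, one_mul] at this
    exact this.mono_left nhdsWithin_le_nhds
  refine le_of_tendsto hlim ?_
  filter_upwards [Ioo_mem_nhdsGT (zero_lt_one' ℝ)] with θ hθ using key θ hθ.1 hθ.2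

/-- At depth `s` the remaining volume is at most the remaining depth times the perimeter. -/
theorem inv_le_perInner_div_volInner (hKo : IsOpen K) (hKb : Bornology.IsBounded K)
    (hKc : Convex ℝ K) (hKne : K.Nonempty) (hs0 : 0 ≤ s) (hs : s < inradius K) :
    (inradius K - s)⁻¹ ≤ perInner K s / volInner K s := by
  have h1 := volInner_le hKo hKb hKc hKne hs0 hs (sub_nonneg.2 hs.le)
  have h0 : volInner K (s + (inradius K - s)) = 0 := by
    rw [volInner, add_sub_cancel, innerParallel_inradius hKb]
    simp
  rw [h0, zero_add] at h1
  rw [inv_eq_one_div, div_le_div_iff₀ (sub_pos.2 hs) (volInner_pos hKo hKb hKne hs)]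
  linarith

/-- The two normalisations of the Hausdorff measure differ by a positive constant. -/
theorem exists_perim_eq (m : ℕ) : ∃ κ : ℝ, 0 < κ ∧ ∀ (K : Set (𝔼 (m + 1))) (r : ℝ),
    perim (innerParallel K r) = κ * perInner K r := by
  have h0 := Measure.addHaarScalarFactor_volume_hausdorffMeasure_ne_zero m
  refine ⟨((Measure.addHaarScalarFactor (volume : Measure (𝔼 m)) μH[m] : NNReal) : ℝ)⁻¹,
    inv_pos.2 (NNReal.coe_pos.2 (pos_iff_ne_zero.2 h0)), fun K r => ?_⟩
  have e : ((m + 1 : ℕ) : ℝ) - 1 = m := by push_cast; ring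
  rw [perim, e, perInner, Measure.euclideanHausdorffMeasure_def, Measure.smul_apply,
    ENNReal.smul_def, smul_eq_mul, ENNReal.toReal_mul, ENNReal.coe_toReal,
    inv_mul_cancel_left₀ (NNReal.coe_ne_zero.2 h0)]

end innerParallel

theorem stmt_1 (n : ℕ) (hn : 2 ≤ n) (Ω : Set (EuclideanSpace ℝ (Fin n)))
    (hΩo : IsOpen Ω) (hΩb : Bornology.IsBounded Ω) (hΩc : Convex ℝ Ω)
    (hΩne : Ω.Nonempty) :
    MonotoneOn (fun r => perim (innerParallel Ω r) / (volume (innerParallel Ω r)).toReal)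
      (Set.Ico 0 (inradius Ω)) ∧
    Tendsto (fun r => perim (innerParallel Ω r) / (volume (innerParallel Ω r)).toReal)
      (nhdsWithin (inradius Ω) (Set.Iio (inradius Ω))) atTop := by

  obtain ⟨m, rfl⟩ : ∃ m, n = m + 1 := ⟨n - 1, by omega⟩
  obtain ⟨κ, hκ, hperim⟩ := exists_perim_eq m
  have hψ : (fun r => perim (innerParallel Ω r) / (volume (innerParallel Ω r)).toReal) =
      fun r => κ * (perInner Ω r / volInner Ω r) :=
    funext fun r => by rw [hperim, mul_div_assoc, volInner]
  rw [hψ]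
  constructor
  · intro r hr s hs hrs
    exact mul_le_mul_of_nonneg_left
      (perInner_div_volInner_le hΩo hΩb hΩc hΩne hr.1 hrs hs.2) hκ.le
  · refine Tendsto.const_mul_atTop hκ ?_
    have h0 : Tendsto (fun s => inradius Ω - s) (nhdsWithin (inradius Ω) (Iio (inradius Ω)))
        (nhdsWithin 0 (Ioi 0)) := by
      refine tendsto_nhdsWithin_iff.2 ⟨?_, ?_⟩
      · have hc : Continuous fun s => inradius Ω - s := by fun_prop
        have := hc.tendsto (inradius Ω)
        rw [sub_self] at this
        exact this.mono_left nhdsWithin_le_nhds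
      · filter_upwards [self_mem_nhdsWithin] with s (hs : s < inradius Ω) using sub_pos.2 hs
    refine tendsto_atTop_mono' _ ?_ (tendsto_inv_nhdsGT_zero.comp h0)
    filter_upwards [Ioo_mem_nhdsLT (inradius_pos hΩo hΩb hΩne)] with s hs
    exact inv_le_perInner_div_volInner hΩo hΩb hΩc hΩne hs.1.le hs.2
end
end
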